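/- arXiv:1707.02384 — 3 statements merged into one kernel-verified Lean document; each statement's English description precedes it below -/
import Mathlib

section
/- Let q ≥ 10 be an integer, let T be a tournament, and let Ω be a collection of pairwise vertex-disjoint q-cycles of T such that the subtournament T ∖ Ω contains no q-cycle. Let P = (u_l, …, u₂, u₁) be a Hamiltonian path of T ∖ Ω (so (u_{i+1}, u_i) is an arc for each i) with l ≥ 4q − 5, and set U₁ = {u₁, …, u_{q+1}} and U₂ = {u_{4q−4}, …, u_l}. If some cycle C ∈ Ω admits a q-matching from U₁ to C and a 2-matching from C to U₂, then T contains |Ω| + 1 pairwise vertex-disjoint q-cycles. -/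
open Set

/-- `T` is a tournament: irreflexive, and for distinct vertices exactly one
of the two possible arcs is present. -/
def IsTournament {V : Type*} (T : V → V → Prop) : Prop :=
  (∀ x, ¬ T x x) ∧ ∀ x y, x ≠ y → (T x y ↔ ¬ T y x)

/-- `c` is a directed cycle of length `q` in the digraph `T`. -/
def IsCycle {V : Type*} (T : V → V → Prop) (q : ℕ) (c : ZMod q → V) : Prop :=
  Function.Injective c ∧ ∀ i, T (c i) (c (i + 1))

/-- The cycles in the family `C` are pairwise vertex-disjoint. -/
def DisjointCycles {V : Type*} {k q : ℕ} (C : Fin k → ZMod q → V) : Prop :=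
  ∀ j j' : Fin k, j ≠ j' → Disjoint (Set.range (C j)) (Set.range (C j'))

/-- `T` contains `k` pairwise vertex-disjoint directed cycles of length `q`. -/
def HasDisjointCycles {V : Type*} (T : V → V → Prop) (k q : ℕ) : Prop :=
  ∃ C : Fin k → ZMod q → V, (∀ j, IsCycle T q (C j)) ∧ DisjointCycles C

/-- The out-degree of a vertex `v`. -/
noncomputable def outDeg {V : Type*} (T : V → V → Prop) (v : V) : ℕ :=
  {w | T v w}.ncard

/-- `d⁺(v, Y)`: the number of out-neighbours of `v` inside the set `Y`. -/
noncomputable def outDegTo {V : Type*} (T : V → V → Prop) (v : V) (Y : Set V) : ℕ :=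
  {w ∈ Y | T v w}.ncard

/-- `d⁺(X, v)`: the number of in-neighbours of `v` inside the set `X`. -/
noncomputable def inDegFrom {V : Type*} (T : V → V → Prop) (X : Set V) (v : V) : ℕ :=
  {x ∈ X | T x v}.ncard

/-- `d⁺(X, Y)`: the number of arcs from `X` to `Y`. -/
noncomputable def arcs {V : Type*} (T : V → V → Prop) (X Y : Set V) : ℕ :=
  {p : V × V | p.1 ∈ X ∧ p.2 ∈ Y ∧ T p.1 p.2}.ncard

/-- There is an `r`-matching from `X` to `Y`: `r` arcs from `X` to `Y` that
pairwise share no endpoints. -/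
def HasMatching {V : Type*} (T : V → V → Prop) (X Y : Set V) (r : ℕ) : Prop :=
  ∃ e : Fin r → V × V,
    (∀ i, (e i).1 ∈ X ∧ (e i).2 ∈ Y ∧ T (e i).1 (e i).2) ∧
    ∀ i j, i ≠ j → (e i).1 ≠ (e j).1 ∧ (e i).2 ≠ (e j).2

/-- `u` is a Hamiltonian path of the subtournament induced on `S`, written as
`P = (u_{l} … u₂ u₁)`: the vertex `u ⟨0,_⟩` is `u₁`, and each arc goes from the
higher-indexed vertex to the next lower-indexed one. -/
def IsHamPathOn {V : Type*} (T : V → V → Prop) (S : Set V) {l : ℕ}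
    (u : Fin l → V) : Prop :=
  Function.Injective u ∧ Set.range u = S ∧
    ∀ (i : ℕ) (h : i + 1 < l), T (u ⟨i + 1, h⟩) (u ⟨i, Nat.lt_of_succ_lt h⟩)


theorem cyc_of_fun {V : Type*} {T : V → V → Prop} {k : ℕ} (hk : 2 ≤ k) (g : ℕ → V)
    (hinj : ∀ i j, i < k → j < k → g i = g j → i = j)
    (harc : ∀ i, i + 1 < k → T (g i) (g (i + 1)))
    (hlast : T (g (k - 1)) (g 0)) : IsCycle T k (fun z => g z.val) := by
  have : NeZero k := ⟨by omega⟩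
  have : Fact (1 < k) := ⟨by omega⟩
  refine ⟨?_, ?_⟩
  · intro a b h
    exact ZMod.val_injective k (hinj _ _ (ZMod.val_lt a) (ZMod.val_lt b) h)
  · intro z
    have hz := ZMod.val_lt z
    have e : (z + 1).val = (z.val + 1) % k := by
      rw [ZMod.val_add, ZMod.val_one]
    show T (g z.val) (g (z + 1).val)
    rw [e]
    by_cases h : z.val + 1 < k
    · rw [Nat.mod_eq_of_lt h]; exact harc _ h
    · have h2 : z.val + 1 = k := by omega
      rw [h2, Nat.mod_self]
      have h3 : z.val = k - 1 := by omega
      rw [h3]; exact hlast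

theorem range_of_fun {V : Type*} {k : ℕ} (hk : 2 ≤ k) (g : ℕ → V) (S : Set V)
    (h : ∀ i, i < k → g i ∈ S) : Set.range (fun z : ZMod k => g z.val) ⊆ S := by
  have : NeZero k := ⟨by omega⟩
  rintro _ ⟨z, rfl⟩
  exact h _ (ZMod.val_lt z)

theorem zmod_closed {m : ℕ} [NeZero m] (P : ZMod m → Prop) (h : ∀ i, P i → P (i + 1))
    (i j : ZMod m) (hi : P i) : P j := by
  have key : ∀ n : ℕ, P (i + (n : ZMod m)) := by
    intro n
    induction n with
    | zero => simpa using hi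
    | succ n ih =>
      have := h _ ih
      push_cast
      rwa [← add_assoc]
  have := key (j - i).val
  simpa using this

theorem natCast_inj_lt {k i j : ℕ} (hi : i < k) (hj : j < k)
    (h : (i : ZMod k) = (j : ZMod k)) : i = j := by
  have := (ZMod.natCast_eq_natCast_iff' i j k).1 h
  rwa [Nat.mod_eq_of_lt hi, Nat.mod_eq_of_lt hj] at this

theorem cycle_grow {V : Type*} [Finite V] {T : V → V → Prop} (hT : IsTournament T) {k m : ℕ}
    (hk : 3 ≤ k) (hkm : k < m) (c : ZMod k → V) (hc : IsCycle T k c)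
    (p : ZMod m → V) (hp : IsCycle T m p) (hsub : Set.range c ⊆ Set.range p) :
    ∃ c' : ZMod (k + 1) → V, IsCycle T (k + 1) c' ∧ Set.range c' ⊆ Set.range p := by
  have : NeZero k := ⟨by omega⟩
  have : NeZero m := ⟨by omega⟩
  have asym : ∀ x y, T x y → ¬ T y x := by
    intro x y h
    by_cases e : x = y
    · subst e; exact hT.1 x
    · exact (hT.2 x y e).1 h
  have hcin : ∀ z, c z ∈ Set.range p := fun z => hsub ⟨z, rfl⟩
  have hinjc : ∀ (r : ZMod k) (i j : ℕ), i < k → j < k → c (r + i) = c (r + j) → i = j := by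
    intro r i j hi hj h
    exact natCast_inj_lt hi hj (add_left_cancel (hc.1 h))
  have hstep : ∀ (r : ZMod k) (i : ℕ), T (c (r + i)) (c (r + (i + 1 : ℕ))) := by
    intro r i
    have := hc.2 (r + i)
    push_cast
    rwa [← add_assoc]
  by_cases hmix : ∃ x ∈ Set.range p, x ∉ Set.range c ∧ ∃ i, T (c i) x ∧ T x (c (i + 1))
  · obtain ⟨x, hxp, hxc, i, h1, h2⟩ := hmix
    have hne : ∀ z, c z ≠ x := fun z h => hxc ⟨z, h⟩
    refine ⟨_, cyc_of_fun (k := k + 1) (by omega)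
      (fun t => if t < k then c (i + 1 + t) else x) ?_ ?_ ?_, range_of_fun (k := k + 1) (by omega)
        (fun t => if t < k then c (i + 1 + t) else x) _ ?_⟩
    · intro a b ha hb hab
      try simp only at hab
      split_ifs at hab with h3 h4 h4
      · exact hinjc _ _ _ h3 h4 hab
      · exact absurd hab (hne _)
      · exact absurd hab.symm (hne _)
      · omega
    · intro t ht
      have h3 : t < k := by omega
      simp only [h3, if_true]
      split_ifs with h4
      · exact hstep _ _
      · have : (i + 1 + (t : ZMod k)) = i := by
          have : ((t + 1 : ℕ) : ZMod k) = 0 := by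
            rw [show t + 1 = k by omega]; simp
          push_cast at this
          linear_combination this
        rw [this]; exact h1
    · simpa [show 0 < k by omega] using h2
    · intro t ht
      try simp only
      split_ifs
      · exact hcin _
      · exact hxp
  · push Not at hmix
    have hup : ∀ x ∈ Set.range p, x ∉ Set.range c → ∀ i j, T (c i) x → T (c j) x := by
      intro x hx hxc i j h
      refine zmod_closed (fun i => T (c i) x) ?_ i j h
      intro i hi
      have h1 := hmix x hx hxc i hi
      have h2 : c (i + 1) ≠ x := fun h => hxc ⟨_, h⟩
      exact (hT.2 _ _ h2).2 h1
    by_cases hba : ∃ a ∈ Set.range p, ∃ b ∈ Set.range p, a ∉ Set.range c ∧ b ∉ Set.range c ∧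
        T (c 0) b ∧ ¬ T (c 0) a ∧ T b a
    · obtain ⟨a, hap, b, hbp, hac, hbc, h1, h2, h3⟩ := hba
      have hab : b ≠ a := by rintro rfl; exact hT.1 _ h3
      have hnea : ∀ z, c z ≠ a := fun z h => hac ⟨z, h⟩
      have hneb : ∀ z, c z ≠ b := fun z h => hbc ⟨z, h⟩
      refine ⟨_, cyc_of_fun (k := k + 1) (by omega)
        (fun t => if t < k - 1 then c (0 + t) else if t = k - 1 then b else a) ?_ ?_ ?_,
        range_of_fun (k := k + 1) (by omega)
        (fun t => if t < k - 1 then c (0 + t) else if t = k - 1 then b else a) _ ?_⟩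
      · intro s t hs ht hst
        try simp only at hst
        split_ifs at hst with h4 h5 h6 h7 h8 h9 h10
        · exact hinjc _ _ _ (by omega) (by omega) hst
        · exact absurd hst (hneb _)
        · exact absurd hst (hnea _)
        · exact absurd hst.symm (hneb _)
        · omega
        · exact absurd hst hab
        · exact absurd hst.symm (hnea _)
        · exact absurd hst.symm hab
        · omega
      · intro t ht
        by_cases h4 : t + 1 < k - 1
        · have h5 : t < k - 1 := by omega
          simp only [h4, h5, if_true]
          exact hstep _ _
        · by_cases h5 : t < k - 1
          · have h6 : t + 1 = k - 1 := by omega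
            simp only [h4, h5, h6, if_true, if_false]
            simp only [lt_irrefl, if_false]
            exact hup b hbp hbc 0 _ h1
          · have h6 : t = k - 1 := by omega
            simp only [h4, h5, if_false]
            rw [if_pos h6, if_neg (by omega)]
            exact h3
      · have h4 : ¬ (k + 1 - 1 < k - 1) := by omega
        have h5 : ¬ (k + 1 - 1 = k - 1) := by omega
        have h6 : 0 < k - 1 := by omega
        simp only [h4, h5, h6, if_true, if_false]
        refine by_contra fun h7 => h2 (hup a hap hac _ 0 ((hT.2 _ _ (hnea _)).2 h7))
      · intro t ht
        try simp only
        split_ifs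
        · exact hcin _
        · exact hbp
        · exact hap
    · exfalso
      push Not at hba
      obtain ⟨z0, hz0⟩ := hcin 0
      have hex : ∃ i, p i ∈ Set.range c ∧ p (i + 1) ∉ Set.range c := by
        by_contra hno
        push Not at hno
        have hall : ∀ j, p j ∈ Set.range c := fun j =>
          zmod_closed (fun i => p i ∈ Set.range c) hno z0 j (by simp [hz0])
        have hss : Set.range p ⊆ Set.range c := by
          rintro _ ⟨j, rfl⟩; exact hall j
        have h1 := Set.ncard_le_ncard hss (Set.toFinite _)
        rw [← Set.image_univ, ← Set.image_univ, Set.ncard_image_of_injective _ hp.1,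
          Set.ncard_image_of_injective _ hc.1, Set.ncard_univ, Set.ncard_univ,
          Nat.card_zmod, Nat.card_zmod] at h1
        omega
      obtain ⟨i, ⟨w, hw⟩, hi2⟩ := hex
      have hQ : ∀ j, p j ∉ Set.range c ∧ T (c 0) (p j) := by
        intro j
        refine zmod_closed (fun j => p j ∉ Set.range c ∧ T (c 0) (p j)) ?_ (i + 1) j ⟨hi2, ?_⟩
        · rintro j ⟨h1, h2⟩
          have hs := hp.2 j
          have h3 : p (j + 1) ∉ Set.range c := by
            rintro ⟨v, hv⟩
            rw [← hv] at hs
            exact asym _ _ hs (hup _ ⟨j, rfl⟩ h1 0 v h2)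
          refine ⟨h3, ?_⟩
          by_contra h4
          exact hba _ ⟨_, rfl⟩ _ ⟨_, rfl⟩ h3 h1 h2 h4 hs
        · apply hup _ ⟨_, rfl⟩ hi2 w
          rw [hw]; exact hp.2 i
      exact (hQ z0).1 ⟨0, hz0.symm⟩

theorem cycle_three {V : Type*} {T : V → V → Prop} (hT : IsTournament T) {m : ℕ}
    (hm : 3 ≤ m) (p : ZMod m → V) (hp : IsCycle T m p) :
    ∃ c' : ZMod 3 → V, IsCycle T 3 c' ∧ Set.range c' ⊆ Set.range p := by
  have asym : ∀ x y, T x y → ¬ T y x := by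
    intro x y h
    by_cases e : x = y
    · subst e; exact hT.1 x
    · exact (hT.2 x y e).1 h
  have hne : ∀ i j : ℕ, i < m → j < m → i ≠ j → p i ≠ p j := fun i j hi hj hij h =>
    hij (natCast_inj_lt hi hj (hp.1 h))
  have hstep : ∀ i : ℕ, T (p i) (p (i + 1 : ℕ)) := by
    intro i; push_cast; exact hp.2 _
  by_contra hno
  have key : ∀ i : ℕ, i + 1 < m → T (p (0 : ℕ)) (p (i + 1 : ℕ)) := by
    intro i
    induction i with
    | zero => intro _; exact hstep 0
    | succ i ih =>
      intro hi
      have h1 := ih (by omega)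
      by_contra h2
      have h3 : T (p (i + 1 + 1 : ℕ)) (p (0 : ℕ)) :=
        (hT.2 _ _ (hne _ _ hi (by omega) (by omega))).2 h2
      refine hno ⟨_, cyc_of_fun (k := 3) (by omega)
        (fun t => if t = 0 then p (0 : ℕ) else p (i + t : ℕ)) ?_ ?_ ?_,
        range_of_fun (k := 3) (by omega)
        (fun t => if t = 0 then p (0 : ℕ) else p (i + t : ℕ)) _ ?_⟩
      · intro a b ha hb hab
        try simp only at hab
        by_contra hne'
        split_ifs at hab with h4 h5 h5
        · omega
        · exact hne _ _ (by omega) (by omega) (by omega) hab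
        · exact hne _ _ (by omega) (by omega) (by omega) hab
        · exact hne _ _ (by omega) (by omega) (by omega) hab
      · intro t ht
        by_cases h4 : t = 0
        · subst h4
          simpa using h1
        · have h5 : t = 1 := by omega
          subst h5
          exact hstep (i + 1)
      · exact h3
      · intro t ht
        try simp only
        split_ifs
        · exact ⟨_, rfl⟩
        · exact ⟨_, rfl⟩
  have h1 := key (m - 2) (by omega)
  have h2 := hstep (m - 1)
  rw [show m - 1 + 1 = m by omega] at h2
  rw [show m - 2 + 1 = m - 1 by omega] at h1
  have h3 : ((m : ℕ) : ZMod m) = (0 : ℕ) := by simp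
  rw [h3] at h2
  exact asym _ _ h1 h2

theorem cycle_moon {V : Type*} [Finite V] {T : V → V → Prop} (hT : IsTournament T) {m : ℕ}
    (p : ZMod m → V) (hp : IsCycle T m p) (q : ℕ) (hq : 3 ≤ q) (hqm : q ≤ m) :
    ∃ c' : ZMod q → V, IsCycle T q c' ∧ Set.range c' ⊆ Set.range p := by
  induction q, hq using Nat.le_induction with
  | base => exact cycle_three hT hqm p hp
  | succ k hk ih =>
    obtain ⟨c, hc, hs⟩ := ih (by omega)
    exact cycle_grow hT hk (by omega) c hc p hp hs

theorem stmt17 {V : Type*} [Fintype V] (T : V → V → Prop) (hT : IsTournament T)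
    (q n : ℕ) (hq : 10 ≤ q)
    (C : Fin n → ZMod q → V) (hC : ∀ j, IsCycle T q (C j)) (hdisj : DisjointCycles C)
    (hfree : ¬ ∃ c : ZMod q → V, IsCycle T q c ∧
      Set.range c ⊆ (⋃ j, Set.range (C j))ᶜ)
    (l : ℕ) (hl : 4 * q - 5 ≤ l) (u : Fin l → V)
    (hP : IsHamPathOn T ((⋃ j, Set.range (C j))ᶜ) u)
    (j₀ : Fin n)
    (hm1 : HasMatching T (u '' {i : Fin l | (i : ℕ) < q + 1}) (Set.range (C j₀)) q)
    (hm2 : HasMatching T (Set.range (C j₀)) (u '' {i : Fin l | 4 * q - 5 ≤ (i : ℕ)}) 2) :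
    HasDisjointCycles T (n + 1) q := by
  have : NeZero q := ⟨by omega⟩
  obtain ⟨U, hU⟩ : ∃ U : ℕ → V, ∀ i : Fin l, U i = u i :=
    ⟨fun i => if h : i < l then u ⟨i, h⟩ else C j₀ 0, fun i => by simp⟩
  obtain ⟨hui, hur, hua⟩ := hP
  have hUinj : ∀ i j, i < l → j < l → U i = U j → i = j := by
    intro i j hi hj h
    have h1 := hU ⟨i, hi⟩
    have h2 := hU ⟨j, hj⟩
    simp only at h1 h2
    rw [h1, h2] at h
    simpa using hui h
  have hUS : ∀ i, i < l → U i ∈ (⋃ j, Set.range (C j))ᶜ := by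
    intro i hi
    have h1 := hU ⟨i, hi⟩
    simp only at h1
    rw [h1, ← hur]; exact ⟨_, rfl⟩
  have hUarc : ∀ i, i + 1 < l → T (U (i + 1)) (U i) := by
    intro i hi
    have h1 := hU ⟨i + 1, hi⟩
    have h2 := hU ⟨i, by omega⟩
    simp only at h1 h2
    rw [h1, h2]; exact hua i hi
  have hdom : ∀ i j, i + (q - 1) ≤ j → j < l → T (U j) (U i) := by
    intro i j hij hj
    by_contra hno
    have hne : U i ≠ U j := fun h => by
      have := hUinj i j (by omega) hj h
      omega
    have harc : T (U i) (U j) := (hT.2 _ _ hne).2 hno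
    have hbig : IsCycle T (j - i + 1) (fun z => (fun t => U (j - t)) z.val) := by
      refine cyc_of_fun (k := j - i + 1) (by omega) (fun t => U (j - t)) ?_ ?_ ?_
      · intro a b ha hb hab
        have := hUinj _ _ (by omega) (by omega) hab
        omega
      · intro t ht
        have := hUarc (j - (t + 1)) (by omega)
        rwa [show j - (t + 1) + 1 = j - t by omega] at this
      · simp only [Nat.add_sub_cancel]
        rw [show j - (j - i) = i by omega]
        exact harc
    obtain ⟨c, hc, hs⟩ := cycle_moon hT _ hbig q (by omega) (by omega)
    exact hfree ⟨c, hc, hs.trans (range_of_fun (k := j - i + 1) (by omega) (fun t => U (j - t)) _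
      (fun t ht => hUS _ (by omega)))⟩
  have hUC : ∀ i, i < l → ∀ j z, C j z ≠ U i := by
    intro i hi j z h
    exact hUS i hi (Set.mem_iUnion.2 ⟨j, z, h⟩)
  -- in-neighbours of the vertices of the cycle
  have hin : ∃ X : ZMod q → ℕ, Function.Injective X ∧ ∀ z, X z ≤ q ∧ T (U (X z)) (C j₀ z) := by
    obtain ⟨e, he, hed⟩ := hm1
    have h1 : ∀ i, ∃ x : ℕ, x ≤ q ∧ x < l ∧ U x = (e i).1 := by
      intro i
      obtain ⟨x, hx, hx2⟩ := (he i).1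
      refine ⟨x, ?_, x.2, by rw [hU, hx2]⟩
      have : (x : ℕ) < q + 1 := hx
      omega
    choose x hx1 hx2 hx3 using h1
    have h2 : ∀ i, ∃ z, C j₀ z = (e i).2 := fun i => (he i).2.1
    choose f hf using h2
    have hfi : Function.Injective f := by
      intro i j hij
      by_contra hne
      apply (hed i j hne).2
      rw [← hf, ← hf, hij]
    have hfb : Function.Bijective f := by
      rw [Fintype.bijective_iff_injective_and_card]
      exact ⟨hfi, by simp [ZMod.card]⟩
    choose g hg using hfb.2
    refine ⟨fun z => x (g z), ?_, fun z => ⟨hx1 _, ?_⟩⟩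
    · intro z w hzw
      by_contra hne
      have hgne : g z ≠ g w := fun h => hne (by rw [← hg z, ← hg w, h])
      apply (hed _ _ hgne).1
      rw [← hx3, ← hx3]
      exact congrArg U hzw
    · simp only
      rw [hx3]
      have h3 := (he (g z)).2.2
      rwa [← hf, hg] at h3
  obtain ⟨X, hXi, hX⟩ := hin
  have hout : ∃ z w a b, z ≠ w ∧ a ≠ b ∧ 4 * q - 5 ≤ a ∧ 4 * q - 5 ≤ b ∧ a < l ∧ b < l ∧
      T (C j₀ z) (U a) ∧ T (C j₀ w) (U b) ∧ X z < X w := by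
    obtain ⟨e, he, hed⟩ := hm2
    obtain ⟨⟨z, hz⟩, ⟨a, ha, ha2⟩, h0⟩ := he 0
    obtain ⟨⟨w, hw⟩, ⟨b, hb, hb2⟩, h1⟩ := he 1
    have hd := hed 0 1 (by decide)
    rw [← hz, ← hw, ← ha2, ← hb2] at hd
    rw [← hz, ← ha2, ← hU] at h0
    rw [← hw, ← hb2, ← hU] at h1
    have hzw : z ≠ w := fun h => hd.1 (by rw [h])
    have hab : (a : ℕ) ≠ b := fun h => hd.2 (by rw [Fin.ext h])
    rcases lt_trichotomy (X z) (X w) with h | h | h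
    · exact ⟨z, w, a, b, hzw, hab, ha, hb, a.2, b.2, h0, h1, h⟩
    · exact absurd (hXi h) hzw
    · exact ⟨w, z, b, a, hzw.symm, hab.symm, hb, ha, b.2, a.2, h1, h0, h⟩
  obtain ⟨z, w, a, b, hzw, hab, ha, hb, hal, hbl, hza, hwb, hX12⟩ := hout
  obtain ⟨hx, hxz⟩ := hX z
  obtain ⟨hy, hyw⟩ := hX w
  generalize X z = x at *
  generalize X w = y at *
  -- a cycle from a vertex of C and an injective index sequence
  have mk : ∀ (v : ZMod q) (f : ℕ → ℕ), (∀ t, 1 ≤ t → t < q → f t < l) →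
      (∀ s t, 1 ≤ s → s < q → 1 ≤ t → t < q → f s = f t → s = t) →
      T (C j₀ v) (U (f 1)) → (∀ t, 1 ≤ t → t + 1 < q → T (U (f t)) (U (f (t + 1)))) →
      T (U (f (q - 1))) (C j₀ v) →
      IsCycle T q (fun s => (fun t => if t = 0 then C j₀ v else U (f t)) s.val) := by
    intro v f hfl hfi h1 h2 h3
    refine cyc_of_fun (k := q) (by omega) (fun t => if t = 0 then C j₀ v else U (f t)) ?_ ?_ ?_
    · intro s t hs ht hst
      try simp only at hst
      split_ifs at hst with h4 h5 h5
      · omega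
      · exact absurd hst (hUC _ (hfl _ (by omega) ht) _ _)
      · exact absurd hst.symm (hUC _ (hfl _ (by omega) hs) _ _)
      · exact hfi _ _ (by omega) hs (by omega) ht
          (hUinj _ _ (hfl _ (by omega) hs) (hfl _ (by omega) ht) hst)
    · intro t ht
      by_cases h4 : t = 0
      · subst h4; simpa using h1
      · simpa [h4] using h2 t (by omega) ht
    · simpa [show q - 1 ≠ 0 by omega] using h3
  let f1 : ℕ → ℕ := fun t => if t = 1 then a else if t = q - 1 then x else 3 * q - 3 - t
  let f2 : ℕ → ℕ := fun t => if t = 1 then b else y + q - 1 - t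
  have f1l : ∀ t, 1 ≤ t → t < q → f1 t < l := by
    intro t h1 h2; simp only [f1]; split_ifs <;> omega
  have f2l : ∀ t, 1 ≤ t → t < q → f2 t < l := by
    intro t h1 h2; simp only [f2]; split_ifs <;> omega
  have c1 := mk z f1 f1l
    (by intro s t h1 h2 h3 h4 h5
        simp only [f1] at h5; split_ifs at h5 <;> omega)
    (by simpa [f1] using hza)
    (by intro t h1 h2
        by_cases h3 : t = 1
        · subst h3
          have e1 : f1 1 = a := by simp [f1]
          have e2 : f1 (1 + 1) = 3 * q - 5 := by
            simp only [f1]; split_ifs <;> omega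
          rw [e1, e2]; exact hdom _ _ (by omega) hal
        · have e1 : f1 t = 3 * q - 3 - t := by simp only [f1]; split_ifs <;> omega
          rw [e1]
          by_cases h4 : t + 1 = q - 1
          · have e2 : f1 (t + 1) = x := by simp only [f1]; split_ifs <;> omega
            rw [e2]; exact hdom _ _ (by omega) (by omega)
          · have e2 : f1 (t + 1) = 3 * q - 4 - t := by simp only [f1]; split_ifs <;> omega
            rw [e2, show 3 * q - 3 - t = 3 * q - 4 - t + 1 by omega]
            exact hUarc _ (by omega))
    (by have e1 : f1 (q - 1) = x := by simp only [f1]; split_ifs <;> omega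
        rw [e1]; exact hxz)
  have c2 := mk w f2 f2l
    (by intro s t h1 h2 h3 h4 h5
        simp only [f2] at h5; split_ifs at h5 <;> omega)
    (by simpa [f2] using hwb)
    (by intro t h1 h2
        have e2 : f2 (t + 1) = y + q - 2 - t := by simp only [f2]; split_ifs <;> omega
        rw [e2]
        by_cases h3 : t = 1
        · subst h3
          have e1 : f2 1 = b := by simp [f2]
          rw [e1]; exact hdom _ _ (by omega) hbl
        · have e1 : f2 t = y + q - 2 - t + 1 := by simp only [f2]; split_ifs <;> omega
          rw [e1]; exact hUarc _ (by omega))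
    (by have e1 : f2 (q - 1) = y := by simp only [f2]; split_ifs <;> omega
        rw [e1]; exact hyw)
  have hd12 : ∀ s t, 1 ≤ s → s < q → 1 ≤ t → t < q → f1 s ≠ f2 t := by
    intro s t h1 h2 h3 h4
    simp only [f1, f2]; split_ifs <;> omega
  have hoth : ∀ (v : ZMod q) (f : ℕ → ℕ), (∀ t, 1 ≤ t → t < q → f t < l) →
      ∀ j, j ≠ j₀ → Disjoint
        (Set.range (fun s : ZMod q => (fun t => if t = 0 then C j₀ v else U (f t)) s.val))
        (Set.range (C j)) := by
    intro v f hfl j hj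
    rw [Set.disjoint_left]
    intro y hy
    refine range_of_fun (k := q) (by omega) (fun t => if t = 0 then C j₀ v else U (f t)) (Set.range (C j))ᶜ ?_ hy
    intro t ht
    try simp only
    split_ifs with h
    · exact Set.disjoint_left.1 (hdisj j₀ j hj.symm) ⟨v, rfl⟩
    · rintro ⟨s, hs⟩
      exact hUC _ (hfl t (by omega) ht) _ _ hs
  have o1 := hoth z f1 f1l
  have o2 := hoth w f2 f2l
  have o12 : Disjoint
      (Set.range (fun s : ZMod q => (fun t => if t = 0 then C j₀ z else U (f1 t)) s.val))
      (Set.range (fun s : ZMod q => (fun t => if t = 0 then C j₀ w else U (f2 t)) s.val)) := by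
    rw [Set.disjoint_left]
    rintro _ ⟨s, rfl⟩ ⟨t, hst⟩
    have hs := ZMod.val_lt s
    have ht := ZMod.val_lt t
    simp only at hst
    generalize s.val = s' at *
    generalize t.val = t' at *
    split_ifs at hst with h1 h2 h2
    · exact hzw ((hC j₀).1 hst).symm
    · exact hUC _ (f1l _ (by omega) hs) _ _ hst
    · exact hUC _ (f2l _ (by omega) ht) _ _ hst.symm
    · exact hd12 s' t' (by omega) hs (by omega) ht
        (hUinj _ _ (f1l _ (by omega) hs) (f2l _ (by omega) ht) hst.symm)
  generalize (fun s : ZMod q => (fun t => if t = 0 then C j₀ z else U (f1 t)) s.val) = D1 at *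
  generalize (fun s : ZMod q => (fun t => if t = 0 then C j₀ w else U (f2 t)) s.val) = D2 at *
  classical
  have hup : ∀ j, j ≠ j₀ → Function.update C j₀ D1 j = C j := fun j hj =>
    Function.update_of_ne hj _ _
  have hup0 : Function.update C j₀ D1 j₀ = D1 := Function.update_self _ _ _
  have hD2 : ∀ j, Disjoint (Set.range D2) (Set.range (Function.update C j₀ D1 j)) := by
    intro j
    by_cases hj : j = j₀
    · subst hj; rw [hup0]; exact o12.symm
    · rw [hup j hj]; exact o2 j hj
  refine ⟨Fin.cons D2 (Function.update C j₀ D1), ?_, ?_⟩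
  · intro j
    refine Fin.cases ?_ (fun j => ?_) j
    · simpa using c2
    · rw [Fin.cons_succ]
      by_cases hj : j = j₀
      · subst hj; rw [hup0]; exact c1
      · rw [hup j hj]; exact hC j
  · intro i j
    refine Fin.cases ?_ (fun i => ?_) i <;> refine Fin.cases ?_ (fun j => ?_) j
    · intro h; exact absurd rfl h
    · intro _; rw [Fin.cons_zero, Fin.cons_succ]; exact hD2 j
    · intro _; rw [Fin.cons_zero, Fin.cons_succ]; exact (hD2 i).symm
    · intro h
      have hij : i ≠ j := fun e => h (by rw [e])
      rw [Fin.cons_succ, Fin.cons_succ]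
      by_cases hi : i = j₀
      · subst hi; rw [hup0, hup j hij.symm]; exact o1 j hij.symm
      · by_cases hj : j = j₀
        · subst hj; rw [hup0, hup i hi]; exact (o1 i hi).symm
        · rw [hup i hi, hup j hj]; exact hdisj i j hij
end

section
/- Let q ≥ 10 be an integer, let T be a tournament, and let Ω be a collection of pairwise vertex-disjoint q-cycles of T such that the subtournament T ∖ Ω contains no q-cycle. Let P = (u_l, …, u₂, u₁) be a Hamiltonian path of T ∖ Ω (so (u_{i+1}, u_i) is an arc for each i) with l ≥ 4q − 5, and set U₁ = {u₁, …, u_{q+1}} and U₂ = {u_{4q−4}, …, u_l}. If some cycle C ∈ Ω admits a (q − 1)-matching from U₁ to C and a 3-matching from C to U₂, then T contains |Ω| + 1 pairwise vertex-disjoint q-cycles. -/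
open Set

/-- `p 0, …, p (m-1)` is a directed cycle. -/
def Cyc {V : Type*} (T : V → V → Prop) (m : ℕ) (p : ℕ → V) : Prop :=
  (∀ i j, i < m → j < m → p i = p j → i = j) ∧
  (∀ i, i + 1 < m → T (p i) (p (i + 1))) ∧ T (p (m - 1)) (p 0)

lemma Cyc.isCycle {V : Type*} {T : V → V → Prop} {m : ℕ} {p : ℕ → V} (hm : 2 ≤ m)
    (h : Cyc T m p) : ∃ c : ZMod m → V, IsCycle T m c ∧ ∀ z, ∃ i < m, c z = p i := by
  obtain ⟨h1, h2, h3⟩ := h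
  haveI : NeZero m := ⟨by omega⟩
  haveI : Fact (1 < m) := ⟨by omega⟩
  refine ⟨fun z => p z.val, ⟨?_, ?_⟩, fun z => ⟨z.val, ZMod.val_lt z, rfl⟩⟩
  · intro a b hab
    exact ZMod.val_injective m (h1 _ _ (ZMod.val_lt a) (ZMod.val_lt b) hab)
  · intro z
    have hz := ZMod.val_lt z
    have e : (z + 1).val = (z.val + 1) % m := by
      rw [ZMod.val_add, ZMod.val_one]
    show T (p z.val) (p (z + 1).val)
    rw [e]
    by_cases hlt : z.val + 1 < m
    · rw [Nat.mod_eq_of_lt hlt]; exact h2 _ hlt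
    · have : z.val + 1 = m := by omega
      rw [this, Nat.mod_self]
      have : z.val = m - 1 := by omega
      rw [this]; exact h3

lemma Cyc.step {V : Type*} {T : V → V → Prop} {m : ℕ} {p : ℕ → V} (hm : 2 ≤ m)
    (h : Cyc T m p) (r : ℕ) : T (p (r % m)) (p ((r + 1) % m)) := by
  have hz := Nat.mod_lt r (show m > 0 by omega)
  have e : (r + 1) % m = (r % m + 1) % m := by simp
  rw [e]
  by_cases hlt : r % m + 1 < m
  · rw [Nat.mod_eq_of_lt hlt]; exact h.2.1 _ hlt
  · have e1 : r % m + 1 = m := by omega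
    rw [e1, Nat.mod_self]
    have e2 : r % m = m - 1 := by omega
    rw [e2]; exact h.2.2

lemma Cyc.rot {V : Type*} {T : V → V → Prop} {m : ℕ} {p : ℕ → V} (hm : 2 ≤ m)
    (h : Cyc T m p) (r : ℕ) : Cyc T m (fun t => p ((r + t) % m)) := by
  have hm0 : m > 0 := by omega
  refine ⟨?_, ?_, ?_⟩
  · intro i j hi hj hij
    have := h.1 _ _ (Nat.mod_lt _ hm0) (Nat.mod_lt _ hm0) hij
    have h2 : i ≡ j [MOD m] := Nat.ModEq.add_left_cancel' r this
    exact Nat.ModEq.eq_of_lt_of_lt h2 hi hj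
  · intro i _
    exact h.step hm (r + i)
  · have := h.step hm (r + (m - 1))
    have e : r + (m - 1) + 1 = r + 0 + m := by omega
    rw [e, Nat.add_mod_right] at this
    exact this

lemma moon {V : Type*} {T : V → V → Prop} (hT : IsTournament T) (S : Finset V)
    (hS : ∀ A : V → Prop, (∃ x ∈ S, A x) → (∃ y ∈ S, ¬ A y) →
      ∃ x ∈ S, ∃ y ∈ S, A x ∧ ¬ A y ∧ T x y) (k : ℕ) (hk : 3 ≤ k) (hkS : k ≤ S.card) :
    ∃ p, Cyc T k p ∧ ∀ i < k, p i ∈ S := by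
  classical
  have hasym : ∀ x y, T x y → ¬ T y x := by
    intro x y h h'
    by_cases e : x = y
    · subst e; exact hT.1 _ h
    · exact (hT.2 x y e).1 h h'
  have htot : ∀ x y, x ≠ y → ¬ T x y → T y x := by
    intro x y e h
    by_contra h'
    exact h ((hT.2 x y e).2 h')
  induction k, hk using Nat.le_induction with
  | base =>
    obtain ⟨v, hv, v', hv', hvv⟩ := Finset.one_lt_card.1 (show 1 < S.card by omega)
    obtain ⟨x, hx, y, hy, hxv, hyv, hxy⟩ := hS (fun x => x = v) ⟨v, hv, rfl⟩ ⟨v', hv', fun e => hvv e.symm⟩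
    have hxv : x = v := hxv
    subst hxv
    obtain ⟨a, ha, b, hb, hva, hvb, hab⟩ := hS (fun z => T x z) ⟨y, hy, hxy⟩ ⟨x, hx, hT.1 x⟩
    have hbx : b ≠ x := by
      rintro rfl; exact hasym _ _ hva hab
    have hbx' : T b x := htot _ _ hbx.symm hvb
    have hax : a ≠ x := by rintro rfl; exact hT.1 _ hva
    have haxb : a ≠ b := by rintro rfl; exact hT.1 _ hab
    refine ⟨fun t => if t = 0 then x else if t = 1 then a else b, ⟨?_, ?_, ?_⟩, ?_⟩
    · intro i j hi hj hij
      interval_cases i <;> interval_cases j <;> simp_all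
    · intro i hi
      have : i < 2 := by omega
      interval_cases i <;> simp_all
    · simpa using hbx'
    · intro i hi
      interval_cases i <;> simp_all
  | succ k hk ih =>
    obtain ⟨p, hp, hpS⟩ := ih (by omega)
    by_cases h1 : ∃ v ∈ S, (∀ i < k, p i ≠ v) ∧ (∃ i < k, T (p i) v) ∧ (∃ j < k, T v (p j))
    · obtain ⟨v, hv, hvp, ⟨i, hi, hiv⟩, ⟨j, hj, hjv⟩⟩ := h1
      have h2 : ∃ r, T (p (r % k)) v ∧ T v (p ((r + 1) % k)) := by
        by_contra hno
        push Not at hno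
        have : ∀ d, T (p ((i + d) % k)) v := by
          intro d
          induction d with
          | zero => rw [Nat.add_zero, Nat.mod_eq_of_lt hi]; exact hiv
          | succ d ihd =>
            have h3 := hno _ ihd
            refine htot _ _ (fun e => hvp _ (Nat.mod_lt _ (by omega)) e.symm) h3
        have h4 := this (j + k - i)
        have e : i + (j + k - i) = j + k := by omega
        rw [e, Nat.add_mod_right, Nat.mod_eq_of_lt hj] at h4
        exact hasym _ _ h4 hjv
      obtain ⟨r, hr1, hr2⟩ := h2
      have hrot := hp.rot (by omega) (r + 1)
      have hlast : T (p ((r + 1 + (k - 1)) % k)) v := by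
        have e : r + 1 + (k - 1) = r + k := by omega
        rw [e, Nat.add_mod_right]; exact hr1
      have hmem : ∀ t, p ((r + 1 + t) % k) ∈ S := fun t => hpS _ (Nat.mod_lt _ (by omega))
      have hne : ∀ t, p ((r + 1 + t) % k) ≠ v := fun t => hvp _ (Nat.mod_lt _ (by omega))
      have hfirst : T v (p ((r + 1 + 0) % k)) := hr2
      generalize hP : (fun t => p ((r + 1 + t) % k)) = P at hrot
      have hP' : ∀ t, p ((r + 1 + t) % k) = P t := fun t => by rw [← hP]
      simp only [hP'] at hlast hmem hne hfirst
      refine ⟨fun t => if t < k then P t else v, ⟨?_, ?_, ?_⟩, ?_⟩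
      · intro a b ha hb hab
        have := hrot.1 a b
        grind
      · intro a ha
        have := hrot.2.1 a
        by_cases hak : a + 1 < k
        · have h' : a < k := by omega
          simp only [hak, h', if_true]; exact this hak
        · have h' : a = k - 1 := by omega
          have h'' : a < k := by omega
          simp only [hak, h'', if_true, if_false]; rw [h']; exact hlast
      · have : 0 < k := by omega
        simpa [this] using hfirst
      · intro a ha
        show (if a < k then P a else v) ∈ S
        split_ifs
        · exact hmem a
        · exact hv
    · push Not at h1
      -- a vertex outside
      have hout : ∃ y ∈ S, ¬ (∃ i < k, p i = y) := by
        by_contra hno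
        push Not at hno
        have : S ⊆ (Finset.range k).image p := by
          intro y hy
          obtain ⟨i, hi, e⟩ := hno y hy
          exact Finset.mem_image.2 ⟨i, Finset.mem_range.2 hi, e⟩
        have := Finset.card_le_card this
        have h2 := Finset.card_image_le (s := Finset.range k) (f := p)
        rw [Finset.card_range] at h2
        omega
      obtain ⟨x, hx, y, hy, ⟨i, hi, hxi⟩, hyn, hxy⟩ :=
        hS (fun y => ∃ i < k, p i = y) ⟨p 0, hpS 0 (by omega), 0, by omega, rfl⟩ hout
      push Not at hyn
      obtain ⟨b, hb, a, ha, ⟨hb1, hb2⟩, hna, hba⟩ :=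
        hS (fun z => (∀ i < k, p i ≠ z) ∧ ∀ i < k, T (p i) z)
          ⟨y, hy, hyn, fun j hj => htot _ _ (hyn j hj).symm (h1 y hy hyn ⟨i, hi, hxi ▸ hxy⟩ j hj)⟩
          ⟨p 0, hpS 0 (by omega), fun h => h.1 0 (by omega) rfl⟩
      have ha1 : ∀ i < k, p i ≠ a := by
        intro i hi e
        exact hasym _ _ hba (e ▸ hb2 i hi)
      have ha2 : ∀ i < k, T a (p i) := by
        intro i hi
        by_contra hcon
        have h5 := htot _ _ (ha1 i hi).symm hcon
        refine hna ⟨ha1, fun j hj => htot _ _ (ha1 j hj).symm (h1 a ha ha1 ⟨i, hi, h5⟩ j hj)⟩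
      have hab : a ≠ b := by rintro rfl; exact hT.1 _ hba
      refine ⟨fun t => if t = 0 then b else if t = 1 then a else if t < k then p t else p 0,
        ⟨?_, ?_, ?_⟩, ?_⟩
      · intro s t hs ht hst
        have h01 := hp.1 s t
        have h02 := hp.1 s 0
        have h03 := hp.1 0 t
        have := hb1 s
        have := hb1 t
        have := ha1 s
        have := ha1 t
        have := hb1 0
        have := ha1 0
        grind
      · intro s hs
        have h01 := hp.2.1 s
        have h02 := hp.2.2
        by_cases e0 : s = 0
        · subst e0; simpa using hba
        by_cases e1 : s = 1
        · subst e1; 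
          have : 2 < k := by omega
          simpa [this] using ha2 2 this
        by_cases e2 : s + 1 < k
        · have e3 : s < k := by omega
          simp only [e0, e1, e2, e3, if_true, if_false, Nat.add_eq_zero_iff, Nat.add_eq_right, one_ne_zero, and_false]
          exact h01 e2
        · have e3 : s < k := by omega
          have e4 : s = k - 1 := by omega
          simp only [e0, e1, e2, e3, if_true, if_false, Nat.add_eq_zero_iff, Nat.add_eq_right, one_ne_zero, and_false]
          rw [e4]; exact h02
      · have e0 : k ≠ 0 := by omega
        have e1 : k ≠ 1 := by omega
        simpa [e0, e1] using hb2 0 (by omega)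
      · intro s hs
        show (if s = 0 then b else if s = 1 then a else if s < k then p s else p 0) ∈ S
        split_ifs with h1 h2 h3
        · exact hb
        · exact ha
        · exact hpS _ h3
        · exact hpS 0 (by omega)

lemma long_arc {V : Type*} {T : V → V → Prop} (hT : IsTournament T) {q l : ℕ} (hq : 3 ≤ q)
    (U : ℕ → V) (hinj : ∀ i j, i < l → j < l → U i = U j → i = j)
    (hstep : ∀ i, i + 1 < l → T (U (i + 1)) (U i))
    (hfree : ¬ ∃ p, Cyc T q p ∧ ∀ t < q, ∃ i < l, p t = U i)
    (i j : ℕ) (hi : i < l) (hij : j + (q - 1) ≤ i) : T (U i) (U j) := by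
  classical
  by_contra hcon
  have hne : U j ≠ U i := fun e => by have := hinj _ _ (by omega) hi e; omega
  have hback : T (U j) (U i) := (hT.2 _ _ hne).2 hcon
  have hcard : ((Finset.Icc j i).image U).card = i + 1 - j := by
    rw [Finset.card_image_of_injOn, Nat.card_Icc]
    intro a ha b hb hab
    simp only [Finset.coe_Icc, Set.mem_Icc] at ha hb
    exact hinj _ _ (by omega) (by omega) hab
  obtain ⟨p, hp, hpS⟩ := moon hT ((Finset.Icc j i).image U) (by
    rintro A ⟨x, hx, hAx⟩ ⟨y, hy, hAy⟩
    obtain ⟨a, ha, rfl⟩ := Finset.mem_image.1 hx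
    obtain ⟨b, hb, rfl⟩ := Finset.mem_image.1 hy
    rw [Finset.mem_Icc] at ha hb
    by_contra hno
    have hno' : ∀ s t, j ≤ s → s ≤ i → j ≤ t → t ≤ i → A (U s) → T (U s) (U t) → A (U t) := by
      intro s t h1 h2 h3 h4 h5 h6
      by_contra h7
      exact hno ⟨U s, Finset.mem_image.2 ⟨s, Finset.mem_Icc.2 ⟨h1, h2⟩, rfl⟩, U t,
        Finset.mem_image.2 ⟨t, Finset.mem_Icc.2 ⟨h3, h4⟩, rfl⟩, h5, h7, h6⟩
    have hdown : ∀ d s t, s = t + d → j ≤ t → s ≤ i → A (U s) → A (U t) := by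
      intro d
      induction d with
      | zero => intro s t e _ _ h; rw [e] at h; exact h
      | succ d ih =>
        intro s t e h1 h2 h3
        refine ih (s - 1) t (by omega) h1 (by omega) ?_
        refine hno' s (s - 1) (by omega) h2 (by omega) (by omega) h3 ?_
        have := hstep (s - 1) (by omega)
        rwa [Nat.sub_add_cancel (by omega)] at this
    have hj := hdown (a - j) a j (by omega) le_rfl ha.2 hAx
    have hi' := hno' j i le_rfl (by omega) (by omega) le_rfl hj hback
    exact hAy (hdown (i - b) i b (by omega) hb.1 le_rfl hi')) q hq (by omega)
  refine hfree ⟨p, hp, fun t ht => ?_⟩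
  obtain ⟨a, ha, e⟩ := Finset.mem_image.1 (hpS t ht)
  rw [Finset.mem_Icc] at ha
  exact ⟨a, by omega, e.symm⟩

lemma mkCycle {V : Type*} {T : V → V → Prop} {q l : ℕ} (hq : 4 ≤ q)
    (U : ℕ → V) (hinj : ∀ i j, i < l → j < l → U i = U j → i = j)
    (hstep : ∀ i, i + 1 < l → T (U (i + 1)) (U i))
    (hlong : ∀ i j, i < l → j + (q - 1) ≤ i → T (U i) (U j))
    (f : ℕ → V) (hf : ∀ t, T (f t) (f (t + 1)))
    (hfinj : ∀ s t, 1 ≤ s → s ≤ q → 1 ≤ t → t ≤ q → f s = f t → s = t)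
    (hfU : ∀ t i, i < l → f t ≠ U i)
    (α s m lo a b : ℕ) (hα : 1 ≤ α) (hs : 1 ≤ s) (hsq : α + s ≤ q + 1) (hm : s + m + 2 = q)
    (hlo : 2 * q - 1 ≤ lo) (hlo' : lo + m ≤ 3 * q - 3)
    (ha : 4 * q - 5 ≤ a) (hal : a < l) (hb : b ≤ q)
    (hfa : T (f (α + s - 1)) (U a)) (hbf : T (U b) (f α)) :
    ∃ c : ZMod q → V, IsCycle T q c ∧ ∀ z, (∃ t, α ≤ t ∧ t < α + s ∧ c z = f t) ∨
      (∃ i, i < l ∧ (i = a ∨ i = b ∨ (lo ≤ i ∧ i < lo + m)) ∧ c z = U i) := by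
  let g : ℕ → ℕ := fun t => if t = s then a else if t < s + 1 + m then lo + m - 1 - (t - s - 1) else b
  let p : ℕ → V := fun t => if t < s then f (α + t) else U (g t)
  have hgl : ∀ t, g t < l := by
    intro t; simp only [g]; split_ifs <;> omega
  have hcyc : Cyc T q p := by
    refine ⟨?_, ?_, ?_⟩
    · intro i j hi hj hij
      simp only [p] at hij
      split_ifs at hij with h1 h2 h2
      · have := hfinj _ _ (by omega) (by omega) (by omega) (by omega) hij
        omega
      · exact absurd hij (hfU _ _ (hgl _))
      · exact absurd hij.symm (hfU _ _ (hgl _))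
      · have := hinj _ _ (hgl _) (hgl _) hij
        simp only [g] at this
        split_ifs at this <;> omega
    · intro i hi
      by_cases h1 : i + 1 < s
      · have h2 : i < s := by omega
        simp only [p, h1, h2, if_true]
        exact hf (α + i)
      by_cases h2 : i < s
      · have h3 : i + 1 = s := by omega
        have h4 : g (i + 1) = a := by simp [g, h3]
        simp only [p, h1, h2, if_true, if_false, h4]
        have e : α + i = α + s - 1 := by omega
        rw [e]; exact hfa
      · simp only [p, h1, h2, if_false]
        have key : g i = g (i + 1) + 1 ∨ g (i + 1) + (q - 1) ≤ g i := by
          simp only [g]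
          split_ifs <;> omega
        rcases key with h | h
        · have h' := hgl i
          rw [h] at h' ⊢
          exact hstep _ h'
        · exact hlong _ _ (hgl _) h
    · have h1 : ¬ (q - 1 < s) := by omega
      have h2 : 0 < s := by omega
      have h3 : g (q - 1) = b := by
        simp only [g]; split_ifs <;> omega
      simp only [p, h1, h2, if_true, if_false, h3]
      exact hbf
  obtain ⟨c, hc, hcp⟩ := hcyc.isCycle (by omega)
  refine ⟨c, hc, fun z => ?_⟩
  obtain ⟨i, hi, e⟩ := hcp z
  by_cases h1 : i < s
  · left
    refine ⟨α + i, by omega, by omega, ?_⟩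
    rw [e]; simp only [p, h1, if_true]
  · right
    refine ⟨g i, hgl i, ?_, ?_⟩
    · simp only [g]; split_ifs <;> omega
    · rw [e]; simp only [p, h1, if_false]

lemma choose_starts (q g : ℕ) (hq : 10 ≤ q) (hg1 : 1 ≤ g) (hgq : g < q) (M : ℕ → Prop)
    (hM : ∀ s t, 1 ≤ s → s ≤ q → 1 ≤ t → t ≤ q → s ≠ t → M s ∨ M t) (hMg : M g) (hMq : M q) :
    ∃ α β, 1 ≤ α ∧ α ≤ g ∧ g + 1 ≤ β ∧ β ≤ q ∧ M α ∧ M β ∧ g + 1 - α ≤ q - 2 ∧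
      q + 1 - β ≤ q - 2 ∧ q - 2 ≤ (g + 1 - α) + (q + 1 - β) := by
  by_cases h1 : g = 1
  · rcases hM 3 4 (by omega) (by omega) (by omega) (by omega) (by omega) with h | h
    · exact ⟨1, 3, by omega, by omega, by omega, by omega, h1 ▸ hMg, h, by omega, by omega, by omega⟩
    · exact ⟨1, 4, by omega, by omega, by omega, by omega, h1 ▸ hMg, h, by omega, by omega, by omega⟩
  by_cases h2 : g = q - 1
  · rcases hM 2 3 (by omega) (by omega) (by omega) (by omega) (by omega) with h | h
    · exact ⟨2, q, by omega, by omega, by omega, by omega, h, hMq, by omega, by omega, by omega⟩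
    · exact ⟨3, q, by omega, by omega, by omega, by omega, h, hMq, by omega, by omega, by omega⟩
  by_cases m1 : M 1
  · rcases hM (g + 1) (g + 2) (by omega) (by omega) (by omega) (by omega) (by omega) with h | h
    · exact ⟨1, g + 1, by omega, by omega, by omega, by omega, m1, h, by omega, by omega, by omega⟩
    · exact ⟨1, g + 2, by omega, by omega, by omega, by omega, m1, h, by omega, by omega, by omega⟩
  · have h3 : M 2 := (hM 1 2 (by omega) (by omega) (by omega) (by omega) (by omega)).resolve_left m1
    have h4 : M (g + 1) :=
      (hM 1 (g + 1) (by omega) (by omega) (by omega) (by omega) (by omega)).resolve_left m1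
    exact ⟨2, g + 1, by omega, by omega, by omega, by omega, h3, h4, by omega, by omega, by omega⟩

theorem stmt18 {V : Type*} [Fintype V] (T : V → V → Prop) (hT : IsTournament T)
    (q n : ℕ) (hq : 10 ≤ q)
    (C : Fin n → ZMod q → V) (hC : ∀ j, IsCycle T q (C j)) (hdisj : DisjointCycles C)
    (hfree : ¬ ∃ c : ZMod q → V, IsCycle T q c ∧
      Set.range c ⊆ (⋃ j, Set.range (C j))ᶜ)
    (l : ℕ) (hl : 4 * q - 5 ≤ l) (u : Fin l → V)
    (hP : IsHamPathOn T ((⋃ j, Set.range (C j))ᶜ) u)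
    (j₀ : Fin n)
    (hm1 : HasMatching T (u '' {i : Fin l | (i : ℕ) < q + 1}) (Set.range (C j₀)) (q - 1))
    (hm2 : HasMatching T (Set.range (C j₀)) (u '' {i : Fin l | 4 * q - 5 ≤ (i : ℕ)}) 3) :
    HasDisjointCycles T (n + 1) q := by
  classical
  obtain ⟨hPinj, hPrange, hPstep⟩ := hP
  obtain ⟨e1, he1, he1'⟩ := hm1
  obtain ⟨e2, he2, he2'⟩ := hm2
  have hl0 : 0 < l := by
    omega
  haveI : NeZero q := ⟨by omega⟩
  let U : ℕ → V := fun i => if h : i < l then u ⟨i, h⟩ else u ⟨0, hl0⟩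
  have hU : ∀ i (h : i < l), U i = u ⟨i, h⟩ := fun i h => by simp [U, h]
  have hinj : ∀ i j, i < l → j < l → U i = U j → i = j := by
    intro i j hi hj h
    rw [hU i hi, hU j hj] at h
    simpa using hPinj h
  have hstep : ∀ i, i + 1 < l → T (U (i + 1)) (U i) := by
    intro i hi
    rw [hU _ hi, hU i (by omega)]
    exact hPstep i hi
  have hUout : ∀ i, i < l → ∀ j z, C j z ≠ U i := by
    intro i hi j z h
    have : u ⟨i, hi⟩ ∈ (⋃ j, Set.range (C j))ᶜ := hPrange ▸ Set.mem_range_self _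
    rw [← hU i hi, ← h] at this
    exact this (Set.mem_iUnion.2 ⟨j, Set.mem_range_self z⟩)
  have hlong : ∀ i j, i < l → j + (q - 1) ≤ i → T (U i) (U j) := by
    intro i j
    refine long_arc hT (by omega) U hinj hstep ?_ i j
    rintro ⟨p, hp, hpU⟩
    obtain ⟨c, hc, hcp⟩ := hp.isCycle (by omega)
    refine hfree ⟨c, hc, ?_⟩
    rintro _ ⟨z, rfl⟩
    obtain ⟨t, ht, e⟩ := hcp z
    obtain ⟨i, hi, e'⟩ := hpU t ht
    rw [e, e', hU i hi, ← hPrange]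
    exact Set.mem_range_self _
  -- matched positions of the cycle
  let M : ZMod q → Prop := fun z => ∃ i, (e1 i).2 = C j₀ z
  have hM : ∀ z z', z ≠ z' → M z ∨ M z' := by
    intro z z' hzz
    by_contra hno
    push Not at hno
    obtain ⟨hz, hz'⟩ := hno
    choose w hw using fun i => (he1 i).2.1
    have hwinj : Function.Injective w := by
      intro i j hij
      by_contra hne
      exact (he1' i j hne).2 (by rw [← hw i, ← hw j, hij])
    have hsub : Finset.univ.image w ⊆ (Finset.univ.erase z).erase z' := by
      intro x hx
      obtain ⟨i, _, rfl⟩ := Finset.mem_image.1 hx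
      refine Finset.mem_erase.2 ⟨fun e => hz' ⟨i, ?_⟩, Finset.mem_erase.2 ⟨fun e => hz ⟨i, ?_⟩, Finset.mem_univ _⟩⟩
      · rw [← hw i, e]
      · rw [← hw i, e]
    have hc := Finset.card_le_card hsub
    rw [Finset.card_image_of_injective _ hwinj, Finset.card_erase_of_mem
      (Finset.mem_erase.2 ⟨hzz.symm, Finset.mem_univ _⟩), Finset.card_erase_of_mem (Finset.mem_univ _),
      Finset.card_univ, Finset.card_univ, ZMod.card, Fintype.card_fin] at hc
    omega
  choose y hy using fun i => (he2 i).1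
  have hyne : ∀ i j, i ≠ j → y i ≠ y j := by
    intro i j hne e
    exact (he2' i j hne).1 (by rw [← hy i, ← hy j, e])
  have hpair : ∃ i j, i ≠ j ∧ M (y i) ∧ M (y j) := by
    by_cases h0 : M (y 0)
    · rcases hM _ _ (hyne 1 2 (by decide)) with h | h
      · exact ⟨0, 1, by decide, h0, h⟩
      · exact ⟨0, 2, by decide, h0, h⟩
    · exact ⟨1, 2, by decide, (hM _ _ (hyne 0 1 (by decide))).resolve_left h0,
        (hM _ _ (hyne 0 2 (by decide))).resolve_left h0⟩
  obtain ⟨i1, i2, hi12, hM1, hM2⟩ := hpair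
  obtain ⟨a1, ha1, hua1⟩ := (he2 i1).2.1
  obtain ⟨a2, ha2, hua2⟩ := (he2 i2).2.1
  have ha12 : (a1 : ℕ) ≠ a2 := by
    intro e
    exact (he2' i1 i2 hi12).2 (by rw [← hua1, ← hua2, Fin.ext e])
  let f : ℕ → V := fun t => C j₀ (y i1 + (t : ZMod q))
  let g : ℕ := (y i2 - y i1).val
  have hgcast : ((g : ℕ) : ZMod q) = y i2 - y i1 := ZMod.natCast_zmod_val _
  have hg1 : 1 ≤ g := by
    rcases Nat.eq_zero_or_pos g with h | h
    · exfalso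
      have := (ZMod.val_eq_zero _).1 h
      exact hyne i2 i1 hi12.symm (sub_eq_zero.1 this)
    · exact h
  have hgq : g < q := ZMod.val_lt _
  have hf : ∀ t, T (f t) (f (t + 1)) := by
    intro t
    have := (hC j₀).2 (y i1 + (t : ZMod q))
    simpa [f, add_assoc] using this
  have hfinj : ∀ s t, 1 ≤ s → s ≤ q → 1 ≤ t → t ≤ q → f s = f t → s = t := by
    intro s t h1 h2 h3 h4 h
    have h5 := add_left_cancel ((hC j₀).1 h)
    have h6 := (ZMod.natCast_eq_natCast_iff s t q).1 h5
    have h7 : (s - 1) ≡ (t - 1) [MOD q] := by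
      apply Nat.ModEq.add_right_cancel' 1
      rwa [Nat.sub_add_cancel h1, Nat.sub_add_cancel h3]
    have := Nat.ModEq.eq_of_lt_of_lt h7 (by omega) (by omega)
    omega
  have hfU : ∀ t i, i < l → f t ≠ U i := fun t i hi => hUout i hi _ _
  have hfg : f g = (e2 i2).1 := by
    rw [← hy i2]; simp [f, hgcast]
  have hfq : f q = (e2 i1).1 := by
    rw [← hy i1]; simp [f]
  obtain ⟨α, β, h1, h2, h3, h4, hMα, hMβ, h5, h6, h7⟩ := choose_starts q g hq hg1 hgq
    (fun t => M (y i1 + (t : ZMod q))) (by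
      intro s t hs1 hs2 ht1 ht2 hst
      refine hM _ _ (fun e => hst (hfinj s t hs1 hs2 ht1 ht2 ?_))
      simp only [f, e]) (by simpa [hgcast] using hM2) (by simpa using hM1)
  obtain ⟨k2, hk2⟩ := hMα
  obtain ⟨k1, hk1⟩ := hMβ
  have hk12 : k1 ≠ k2 := by
    rintro rfl
    have := hfinj α β (by omega) (by omega) (by omega) (by omega) (hk2.symm.trans hk1)
    omega
  obtain ⟨b1, hb1, hub1⟩ := (he1 k1).1
  obtain ⟨b2, hb2, hub2⟩ := (he1 k2).1
  have hb12 : (b1 : ℕ) ≠ b2 := by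
    intro e
    exact (he1' k1 k2 hk12).1 (by rw [← hub1, ← hub2, Fin.ext e])
  simp only [Set.mem_setOf_eq] at ha1 ha2 hb1 hb2
  have hUa1 : U a1 = (e2 i1).2 := by rw [hU _ a1.2, ← hua1]
  have hUa2 : U a2 = (e2 i2).2 := by rw [hU _ a2.2, ← hua2]
  have hUb1 : U b1 = (e1 k1).1 := by rw [hU _ b1.2, ← hub1]
  have hUb2 : U b2 = (e1 k2).1 := by rw [hU _ b2.2, ← hub2]
  obtain ⟨c1, hc1, hc1v⟩ := mkCycle (by omega) U hinj hstep hlong f hf hfinj hfU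
    β (q + 1 - β) (q - 2 - (q + 1 - β)) (2 * q - 1) a1 b1 (by omega) (by omega) (by omega)
    (by omega) (by omega) (by omega) ha1 a1.2 (by omega)
    (by
      have e : β + (q + 1 - β) - 1 = q := by omega
      rw [e, hfq, hUa1]; exact (he2 i1).2.2)
    (by
      have := (he1 k1).2.2
      rw [hk1, ← hUb1] at this; exact this)
  obtain ⟨c2, hc2, hc2v⟩ := mkCycle (by omega) U hinj hstep hlong f hf hfinj hfU
    α (g + 1 - α) (q - 2 - (g + 1 - α)) (2 * q - 1 + (q - 2 - (q + 1 - β))) a2 b2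
    (by omega) (by omega) (by omega)
    (by omega) (by omega) (by omega) ha2 a2.2 (by omega)
    (by
      have e : α + (g + 1 - α) - 1 = g := by omega
      rw [e, hfg, hUa2]; exact (he2 i2).2.2)
    (by
      have := (he1 k2).2.2
      rw [hk2, ← hUb2] at this; exact this)
  have hd12 : Disjoint (Set.range c1) (Set.range c2) := by
    rw [Set.disjoint_left]
    rintro _ ⟨z, rfl⟩ ⟨z', hz'⟩
    rcases hc1v z with ⟨t, ht1, ht2, e⟩ | ⟨i, hi, hi', e⟩ <;>
    rcases hc2v z' with ⟨t', ht1', ht2', e'⟩ | ⟨i', hil, hi'', e'⟩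
    · rw [e, e'] at hz'
      have := hfinj _ _ (by omega) (by omega) (by omega) (by omega) hz'
      omega
    · rw [e, e'] at hz'
      exact hfU _ _ hil hz'.symm
    · rw [e, e'] at hz'
      exact hfU _ _ hi hz'
    · rw [e, e'] at hz'
      have := hinj _ _ hil hi hz'
      omega
  have hdother : ∀ (c : ZMod q → V), (∀ z, (∃ t, c z = f t) ∨ ∃ i, i < l ∧ c z = U i) →
      ∀ j, j ≠ j₀ → Disjoint (Set.range c) (Set.range (C j)) := by
    intro c hc j hj
    rw [Set.disjoint_left]
    rintro _ ⟨z, rfl⟩ ⟨z', hz'⟩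
    rcases hc z with ⟨t, e⟩ | ⟨i, hi, e⟩
    · rw [e] at hz'
      exact Set.disjoint_left.1 (hdisj j j₀ hj) (Set.mem_range_self z') (hz' ▸ Set.mem_range_self _)
    · rw [e] at hz'
      exact hUout i hi _ _ hz'
  have hd1 := hdother c1 (fun z => by
    rcases hc1v z with ⟨t, _, _, e⟩ | ⟨i, hi, _, e⟩
    · exact Or.inl ⟨t, e⟩
    · exact Or.inr ⟨i, hi, e⟩)
  have hd2 := hdother c2 (fun z => by
    rcases hc2v z with ⟨t, _, _, e⟩ | ⟨i, hi, _, e⟩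
    · exact Or.inl ⟨t, e⟩
    · exact Or.inr ⟨i, hi, e⟩)
  let D : Fin n → ZMod q → V := fun j => if j = j₀ then c1 else C j
  have hD0 : D j₀ = c1 := by simp [D]
  have hDn : ∀ j, j ≠ j₀ → D j = C j := fun j hj => by simp [D, hj]
  have hD2 : ∀ j, Disjoint (Set.range c2) (Set.range (D j)) := by
    intro j
    by_cases hj : j = j₀
    · rw [hj, hD0]; exact hd12.symm
    · rw [hDn j hj]; exact hd2 j hj
  refine ⟨Fin.cons c2 D, ?_, ?_⟩
  · intro j
    refine Fin.cases ?_ (fun j => ?_) j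
    · simpa using hc2
    · rw [Fin.cons_succ]
      by_cases hj : j = j₀
      · rw [hj, hD0]; exact hc1
      · rw [hDn j hj]; exact hC j
  · intro j j'
    refine Fin.cases ?_ (fun j => ?_) j <;> refine Fin.cases ?_ (fun j' => ?_) j'
    · intro h; exact absurd rfl h
    · intro _; rw [Fin.cons_zero, Fin.cons_succ]; exact hD2 j'
    · intro _; rw [Fin.cons_zero, Fin.cons_succ]; exact (hD2 j).symm
    · intro h
      rw [Fin.cons_succ, Fin.cons_succ]
      have hne : j ≠ j' := fun e => h (by rw [e])
      by_cases hj : j = j₀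
      · have hj' : j' ≠ j₀ := fun e => hne (hj.trans e.symm)
        rw [hj, hD0, hDn j' hj']; exact hd1 j' hj'
      · by_cases hj' : j' = j₀
        · rw [hj', hD0, hDn j hj]; exact (hd1 j hj).symm
        · rw [hDn j hj, hDn j' hj']; exact hdisj j j' hne
end

section
/- Let q ≥ 10 be an integer, let T be a tournament, and let Ω be a collection of pairwise vertex-disjoint q-cycles of T such that the subtournament T ∖ Ω contains no q-cycle. Let P = (u_l, …, u₂, u₁) be a Hamiltonian path of T ∖ Ω (so (u_{i+1}, u_i) is an arc for each i) with l ≥ 4q − 5, and set U₁ = {u₁, …, u_{q+1}} and U₂ = {u_{4q−4}, …, u_l}. Let Cᵢ and Cⱼ be two distinct cycles of Ω such that there is a q-matching from U₁ to Cᵢ, a 3-matching from Cⱼ to U₂, and the number of arcs from Cᵢ to Cⱼ is at least q² − q + 3. Then T contains |Ω| + 1 pairwise vertex-disjoint q-cycles. -/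
open Set

def SeqC {V : Type*} (T : V → V → Prop) (k : ℕ) (a : ℕ → V) : Prop :=
  (∀ i, T (a i) (a (i + 1))) ∧ ∀ i j, a i = a j ↔ i % k = j % k

def segL {V : Type*} (f : ℕ → V) (s n : ℕ) : List V := (List.range' s n).map f

theorem mem_segL {V : Type*} {f : ℕ → V} {s n : ℕ} {x : V} :
    x ∈ segL f s n ↔ ∃ i, s ≤ i ∧ i < s + n ∧ f i = x := by
  simp [segL, List.mem_range'_1, and_assoc]

theorem chain_segL {V : Type*} {T : V → V → Prop} (f : ℕ → V) (n : ℕ) :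
    ∀ (s : ℕ) (z y : V) (R : List V), (n = 0 → T z y) → (0 < n → T z (f s)) →
    (∀ i, s ≤ i → i + 1 < s + n → T (f i) (f (i + 1))) →
    (0 < n → T (f (s + n - 1)) y) → List.IsChain T (y :: R) →
    List.IsChain T (z :: (segL f s n ++ y :: R)) := by
  induction n with
  | zero => intro s z y R h0 _ _ _ hR
            simpa [segL] using ⟨h0 rfl, hR⟩
  | succ n ih =>
    intro s z y R h0 h1 h2 h3 hR
    have := ih (s + 1) (f s) y R (by
      intro hn; subst hn; simpa using h3 (by omega))
      (fun hn => h2 s le_rfl (by omega))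
      (fun i hi hi' => h2 i (by omega) (by omega))
      (fun hn => by
        have := h3 (by omega)
        rwa [show s + (n + 1) - 1 = s + 1 + n - 1 by omega] at this) hR
    have h := h1 (by omega)
    simp only [segL, List.range'_succ, List.map_cons, List.cons_append] at this ⊢
    exact List.IsChain.cons_cons h this

theorem nodup_segL {V : Type*} {f : ℕ → V} {s n : ℕ}
    (h : ∀ i j, s ≤ i → i < s + n → s ≤ j → j < s + n → f i = f j → i = j) :
    (segL f s n).Nodup := by
  refine List.Nodup.map_on ?_ List.nodup_range'
  intro x hx y hy hxy
  simp only [List.mem_range'_1] at hx hy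
  exact h x y hx.1 hx.2 hy.1 hy.2 hxy

theorem seq_of_list {V : Type*} {T : V → V → Prop} {k : ℕ} (h : V) (t : List V)
    (hk : (h :: t).length = k) (hn : (h :: t).Nodup)
    (hc : List.IsChain T (h :: (t ++ [h]))) :
    ∃ a, SeqC T k a ∧ ∀ i, a i ∈ h :: t := by
  have hk0 : 0 < k := by rw [← hk]; simp
  have hlt : ∀ i, i % k < (h :: t).length := fun i => by rw [hk]; exact Nat.mod_lt _ hk0
  rw [List.isChain_iff_getElem] at hc
  have hk' : t.length + 1 = k := by simpa using hk
  refine ⟨fun i => (h :: t)[i % k]'(hlt i), ⟨?_, ?_⟩, fun i => List.getElem_mem _⟩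
  · intro i
    have h1 := hc (i % k) (by have := hlt i; simp at this ⊢; omega)
    have e1 : (h :: (t ++ [h]))[i % k]'(by have := hlt i; simp at this ⊢; omega)
        = (h :: t)[i % k]'(hlt i) := by
      have : h :: (t ++ [h]) = (h :: t) ++ [h] := rfl
      simp only [this]
      rw [List.getElem_append_left]
    rw [e1] at h1
    have hh : (i + 1) % k = if i % k + 1 = k then 0 else i % k + 1 := by
      rw [← Nat.mod_add_mod]
      split_ifs with hs
      · rw [hs, Nat.mod_self]
      · have := hlt i
        exact Nat.mod_eq_of_lt (by omega)
    by_cases hs : i % k + 1 = k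
    · rw [if_pos hs] at hh
      simp only [hh]
      convert h1 using 1
      have : i % k = t.length := by omega
      simp [this]
    · rw [if_neg hs] at hh
      simp only [hh]
      convert h1 using 1
      have : h :: (t ++ [h]) = (h :: t) ++ [h] := rfl
      simp only [this]
      rw [List.getElem_append_left]
  · intro i j
    rw [hn.getElem_inj_iff]

theorem seq_of_cycle {V : Type*} {T : V → V → Prop} {k : ℕ} {c : ZMod k → V}
    (hc : IsCycle T k c) : SeqC T k (fun i => c (i : ZMod k)) := by
  refine ⟨fun i => by simpa using hc.2 i, fun i j => ?_⟩
  rw [hc.1.eq_iff, ZMod.natCast_eq_natCast_iff']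

theorem cycle_of_seq {V : Type*} {T : V → V → Prop} {k : ℕ} (hk : 2 ≤ k) {a : ℕ → V}
    (ha : SeqC T k a) : IsCycle T k (fun i => a i.val) := by
  have : NeZero k := ⟨by omega⟩
  have : Fact (1 < k) := ⟨by omega⟩
  refine ⟨fun i j h => ?_, fun i => ?_⟩
  · have := (ha.2 _ _).1 h
    rw [Nat.mod_eq_of_lt (ZMod.val_lt i), Nat.mod_eq_of_lt (ZMod.val_lt j)] at this
    exact ZMod.val_injective k this
  · have h1 := ha.1 i.val
    have : a (i + 1).val = a (i.val + 1) := by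
      rw [ha.2, ZMod.val_add, ZMod.val_one, Nat.mod_mod]
    show T _ (a (i + 1).val)
    rwa [this]

theorem mod_inj_window {q s i j : ℕ} (h1 : s ≤ i) (h2 : i < s + q) (h3 : s ≤ j) (h4 : j < s + q)
    (h : i % q = j % q) : i = j := by
  have h' : i ≡ j [MOD q] := h
  rcases le_total i j with hij | hij
  · have := (Nat.modEq_iff_dvd' hij).1 h'
    have := Nat.eq_zero_of_dvd_of_lt this (by omega)
    omega
  · have := (Nat.modEq_iff_dvd' hij).1 h'.symm
    have := Nat.eq_zero_of_dvd_of_lt this (by omega)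
    omega

/-- Growth step. -/
theorem grow {V : Type*} {T : V → V → Prop} (hT : IsTournament T) (S : Set V)
    (hS : ∀ X : Set V, (∃ x ∈ S, x ∈ X) → (∃ x ∈ S, x ∉ X) → ∃ x ∈ S, ∃ y ∈ S, x ∈ X ∧ y ∉ X ∧ T x y)
    (k : ℕ) (hk : 3 ≤ k) (a : ℕ → V) (ha : SeqC T k a) (haS : ∀ i, a i ∈ S)
    (hne : ∃ x ∈ S, ∀ i, a i ≠ x) : ∃ b, SeqC T (k + 1) b ∧ ∀ i, b i ∈ S := by
  have inj : ∀ s i j, s ≤ i → i < s + k → s ≤ j → j < s + k → a i = a j → i = j :=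
    fun s i j h1 h2 h3 h4 h => mod_inj_window h1 h2 h3 h4 ((ha.2 _ _).1 h)
  have per : ∀ i, a (i + k) = a i := fun i => (ha.2 _ _).2 (by simp)
  have tot : ∀ x y, x ≠ y → ¬ T x y → T y x := fun x y h h' => (hT.2 y x h.symm).2 h'
  by_cases hw : ∃ w ∈ S, (∀ i, a i ≠ w) ∧ ∃ i, T (a i) w ∧ T w (a (i + 1))
  · obtain ⟨w, hwS, hwn, i, h1, h2⟩ := hw
    obtain ⟨b, hb, hb'⟩ := seq_of_list (T := T) (k := k + 1) w (segL a (i + 1) k)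
      (by simp [segL]) (by
        rw [List.nodup_cons]
        refine ⟨fun h => ?_, nodup_segL fun x y h1 h2 h3 h4 => inj (i+1) x y h1 h2 h3 h4⟩
        obtain ⟨j, _, _, h⟩ := mem_segL.1 h
        exact hwn j h)
      (chain_segL a k (i + 1) w w [] (by omega) (fun _ => h2) (fun j _ _ => ha.1 j)
        (fun _ => by rw [show i + 1 + k - 1 = i + k by omega, per]; exact h1) (by simp))
    refine ⟨b, hb, fun j => ?_⟩
    rcases List.mem_cons.1 (hb' j) with h | h
    · rw [h]; exact hwS
    · obtain ⟨j, _, _, h⟩ := mem_segL.1 h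
      rw [← h]; exact haS j
  · push Not at hw
    have dom : ∀ w ∈ S, (∀ i, a i ≠ w) → ∀ i, T (a i) w → ∀ j, T (a j) w := by
      intro w hwS hwn i hi
      have up : ∀ d, T (a (i + d)) w := by
        intro d
        induction d with
        | zero => exact hi
        | succ d ih => exact tot _ _ (hwn _).symm (hw w hwS hwn _ ih)
      intro j
      have := up (j + i * (k - 1))
      rwa [(ha.2 (i + (j + i * (k - 1))) j).2 (by
        obtain ⟨k', rfl⟩ : ∃ k', k = k' + 1 := ⟨k - 1, by omega⟩
        have : i + (j + i * (k' + 1 - 1)) = j + (k' + 1) * i := by simp; ring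
        rw [this, Nat.add_mul_mod_self_left])] at this
    obtain ⟨z, hzS, hz⟩ := hne
    obtain ⟨x0, hx0, y0, hy0, hx0', hy0', hxy0⟩ := hS {x | ∀ i, a i ≠ x} ⟨z, hzS, hz⟩
      ⟨a 0, haS 0, fun h => h 0 rfl⟩
    simp only [Set.mem_ofPred_eq, not_forall, not_not] at hx0' hy0'
    obtain ⟨i0, hi0⟩ := hy0'
    subst hi0
    have hx0n : ¬ T (a i0) x0 := (hT.2 _ _ (hx0' i0).symm).1 hxy0
    obtain ⟨x, hx, y, hy, hx', hy', hxy⟩ := hS {x | (∃ i, a i = x) ∨ T (a 0) x}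
      ⟨a 0, haS 0, Or.inl ⟨0, rfl⟩⟩ ⟨x0, hx0, by
        rintro (⟨i, h⟩ | h)
        · exact hx0' i h
        · exact hx0n (dom x0 hx0 hx0' 0 h i0)⟩
    simp only [Set.mem_ofPred_eq, not_or, not_exists] at hx' hy'
    have hxn : ∀ i, a i ≠ x := by
      intro i hi
      subst hi
      exact hy'.2 (dom y hy hy'.1 i hxy 0)
    have hx0 : T (a 0) x := by
      rcases hx' with ⟨i, h⟩ | h
      · exact absurd h (hxn i)
      · exact h
    have hya : ∀ i, T y (a i) := fun i => tot _ _ (hy'.1 i) (fun h => hy'.2 (dom y hy hy'.1 i h 0))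
    obtain ⟨b, hb, hb'⟩ := seq_of_list (T := T) (k := k + 1) x (y :: segL a 2 (k - 1))
      (by simp [segL]; omega) (by
        rw [List.nodup_cons, List.nodup_cons]
        refine ⟨fun h => ?_, fun h => ?_, nodup_segL fun x y h1 h2 h3 h4 => inj 2 x y h1 (by omega) h3 (by omega)⟩
        · rcases List.mem_cons.1 h with h | h
          · subst h; exact hT.1 _ hxy
          · obtain ⟨j, _, _, h⟩ := mem_segL.1 h
            exact hxn j h
        · obtain ⟨j, _, _, h⟩ := mem_segL.1 h
          exact hy'.1 j h)
      (List.IsChain.cons_cons hxy (chain_segL a (k-1) 2 y x [] (by omega) (fun _ => hya 2) (fun j _ _ => ha.1 j)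
        (fun _ => by rw [show 2 + (k - 1) - 1 = 0 + k by omega, per]; exact hx0) (by simp)))
    refine ⟨b, hb, fun j => ?_⟩
    rcases List.mem_cons.1 (hb' j) with h | h
    · rw [h]; exact hx
    rcases List.mem_cons.1 h with h | h
    · rw [h]; exact hy
    · obtain ⟨j, _, _, h⟩ := mem_segL.1 h
      rw [← h]; exact haS j

theorem moon_s19 {V : Type*} {T : V → V → Prop} (hT : IsTournament T) (m : ℕ) (a : ℕ → V)
    (ha : SeqC T m a) (k : ℕ) (hk : 3 ≤ k) (hkm : k ≤ m) :
    ∃ b, SeqC T k b ∧ ∀ i, b i ∈ Set.range a := by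
  have tot : ∀ x y, x ≠ y → ¬ T x y → T y x := fun x y h h' => (hT.2 y x h.symm).2 h'
  have per : ∀ i, a (i + m) = a i := fun i => (ha.2 _ _).2 (by simp)
  induction k, hk using Nat.le_induction with
  | base =>
    -- T (a 0) (a 1), T (a m-1) (a 0)
    have hex : ∃ i, ¬ T (a 0) (a (i + 1)) :=
      ⟨m - 2, fun h => by
        have h1 := ha.1 (m - 1)
        rw [show m - 1 + 1 = 0 + m by omega, per] at h1
        rw [show m - 2 + 1 = m - 1 by omega] at h
        refine (hT.2 _ _ ?_).1 h h1
        intro e; rw [e] at h; exact hT.1 _ h⟩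
    classical
    have hi := Nat.find_spec hex
    have hmin := fun j => Nat.find_min (H := hex) (m := j)
    have hle : Nat.find hex ≤ m - 2 := Nat.find_min' hex (fun h => by
        have h1 := ha.1 (m - 1)
        rw [show m - 1 + 1 = 0 + m by omega, per] at h1
        rw [show m - 2 + 1 = m - 1 by omega] at h
        refine (hT.2 _ _ ?_).1 h h1
        intro e; rw [e] at h; exact hT.1 _ h)
    set i := Nat.find hex
    have hi0 : i ≠ 0 := by
      intro h0; rw [h0] at hi; exact hi (ha.1 0)
    have hp : T (a 0) (a i) := by
      have := hmin (i - 1) (by omega)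
      rw [show i - 1 + 1 = i by omega] at this
      exact not_not.1 this
    have hne : a 0 ≠ a (i + 1) := by
      intro e
      have := mod_inj_window (q := m) (s := 0) (by omega) (by omega) (by omega) (by omega) ((ha.2 _ _).1 e)
      omega
    have hl := tot _ _ hne hi
    obtain ⟨b, hb, hb'⟩ := seq_of_list (T := T) (k := 3) (a 0) [a i, a (i+1)] rfl
      (by
        have h1 : a 0 ≠ a i := fun e => hT.1 (a i) (by rw [e] at hp; exact hp)
        have h2 : a i ≠ a (i + 1) := fun e => hT.1 (a i) (by
          have := ha.1 i; rw [← e] at this; exact this)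
        simp [h1, h2, hne])
      (by simp [hp, hl, ha.1 i])
    refine ⟨b, hb, fun j => ?_⟩
    have := hb' j
    simp only [List.mem_cons, List.not_mem_nil, or_false] at this
    rcases this with h | h | h <;> rw [h] <;> exact ⟨_, rfl⟩
  | succ k hk ih =>
    obtain ⟨b, hb, hbS⟩ := ih (by omega)
    refine grow hT (Set.range a) ?_ k hk b hb hbS ?_
    · rintro X ⟨x, ⟨i, rfl⟩, hi⟩ ⟨y, ⟨j, rfl⟩, hj⟩
      by_contra hcon
      push Not at hcon
      have up : ∀ d, a (i + d) ∈ X := by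
        intro d
        induction d with
        | zero => exact hi
        | succ d ih =>
          by_contra hh
          exact hcon _ ⟨_, rfl⟩ _ ⟨_, rfl⟩ ih hh (ha.1 (i + d))
      have := up (j + i * (m - 1))
      rw [(ha.2 (i + (j + i * (m - 1))) j).2 (by
        obtain ⟨k', rfl⟩ : ∃ k', m = k' + 1 := ⟨m - 1, by omega⟩
        have : i + (j + i * (k' + 1 - 1)) = j + (k' + 1) * i := by simp; ring
        rw [this, Nat.add_mul_mod_self_left])] at this
      exact hj this
    · by_contra hcon
      push Not at hcon
      have : ∀ x : Fin m, ∃ i : Fin k, b i = a x := by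
        intro x
        obtain ⟨i, hi⟩ := hcon (a x) ⟨_, rfl⟩
        refine ⟨⟨i % k, Nat.mod_lt _ (by omega)⟩, ?_⟩
        rw [← hi, hb.2]; simp
      choose g hg using this
      have ginj : Function.Injective g := by
        intro x y hxy
        have : a x = a y := by rw [← hg, ← hg, hxy]
        have := (ha.2 _ _).1 this
        rw [Nat.mod_eq_of_lt x.2, Nat.mod_eq_of_lt y.2] at this
        exact Fin.ext this
      have := Fintype.card_le_of_injective g ginj
      simp at this
      omega

theorem core1 {V : Type*} {T : V → V → Prop} (q l : ℕ) (hq : 10 ≤ q) (a b U : ℕ → V)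
    (ha : SeqC T q a) (hb : SeqC T q b) (hab : ∀ i j, a i ≠ b j)
    (haU : ∀ i j, j < l → a i ≠ U j) (hbU : ∀ i j, j < l → b i ≠ U j)
    (hUinj : ∀ i j, i < l → j < l → U i = U j → i = j)
    (hUstep : ∀ i, i + 1 < l → T (U (i + 1)) (U i))
    (hUfar : ∀ i j, i < l → j + (q - 1) ≤ i → T (U i) (U j))
    (v w M μ X α F β : Fin 3 → ℕ)
    (hv : ∀ k, 4 * q - 5 ≤ v k ∧ v k < l) (hvinj : ∀ k k', v k = v k' → k = k')
    (hw : ∀ k, w k ≤ q) (hwinj : ∀ k k', w k = w k' → k = k')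
    (hlen : ∀ k, μ k + α k + β k + 3 = q) (hα : ∀ k, 1 ≤ α k)
    (hM : ∀ k, M k + μ k ≤ q - 2)
    (hMd : ∀ k k', k ≠ k' → M k + μ k ≤ M k' ∨ M k' + μ k' ≤ M k)
    (r : ℕ) (hX : ∀ k, r ≤ X k ∧ X k + α k ≤ r + q)
    (hXd : ∀ k k', k ≠ k' → X k + α k ≤ X k' ∨ X k' + α k' ≤ X k)
    (p : ℕ) (hF : ∀ k, p ≤ F k ∧ F k + β k + 1 ≤ p + q)
    (hFd : ∀ k k', k ≠ k' → F k + β k + 1 ≤ F k' ∨ F k' + β k' + 1 ≤ F k)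
    (hwa : ∀ k, T (U (w k)) (a (X k)))
    (hAB : ∀ k, T (a (X k + α k - 1)) (b (F k)))
    (hbv : ∀ k, T (b (F k + β k)) (U (v k))) :
    ∃ c : Fin 3 → ℕ → V, (∀ k, SeqC T q (c k)) ∧ (∀ k k' i j, k ≠ k' → c k i ≠ c k' j) ∧
      ∀ k i, (∃ j, c k i = a j) ∨ (∃ j, c k i = b j) ∨ ∃ j < l, c k i = U j := by
  have ainj : ∀ i j, r ≤ i → i < r + q → r ≤ j → j < r + q → a i = a j → i = j :=
    fun i j h1 h2 h3 h4 h => mod_inj_window h1 h2 h3 h4 ((ha.2 _ _).1 h)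
  have binj : ∀ i j, p ≤ i → i < p + q → p ≤ j → j < p + q → b i = b j → i = j :=
    fun i j h1 h2 h3 h4 h => mod_inj_window h1 h2 h3 h4 ((hb.2 _ _).1 h)
  let m : ℕ → V := fun i => U (3 * q - 4 - i)
  let t : Fin 3 → List V := fun k =>
    segL m (M k) (μ k) ++ U (w k) :: (segL a (X k) (α k) ++ b (F k) :: segL b (F k + 1) (β k))
  have hmem : ∀ k x, x ∈ U (v k) :: t k →
      (x = U (v k)) ∨ (∃ i, M k ≤ i ∧ i < M k + μ k ∧ x = U (3 * q - 4 - i)) ∨ x = U (w k) ∨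
      (∃ i, X k ≤ i ∧ i < X k + α k ∧ x = a i) ∨ (∃ i, F k ≤ i ∧ i < F k + β k + 1 ∧ x = b i) := by
    intro k x hx
    simp only [t, m, List.mem_cons, List.mem_append, mem_segL] at hx
    rcases hx with h | ⟨i, h1, h2, h3⟩ | h | ⟨i, h1, h2, h3⟩ | h | ⟨i, h1, h2, h3⟩
    · exact Or.inl h
    · exact Or.inr (Or.inl ⟨i, h1, h2, h3.symm⟩)
    · exact Or.inr (Or.inr (Or.inl h))
    · exact Or.inr (Or.inr (Or.inr (Or.inl ⟨i, h1, h2, h3.symm⟩)))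
    · exact Or.inr (Or.inr (Or.inr (Or.inr ⟨F k, le_rfl, by omega, h⟩)))
    · exact Or.inr (Or.inr (Or.inr (Or.inr ⟨i, by omega, by omega, h3.symm⟩)))
  have hdis : ∀ k k' x, k ≠ k' → x ∈ U (v k) :: t k → x ∈ U (v k') :: t k' → False := by
    intro k k' x hk hx hx'
    have hv1 := hv k
    have hv2 := hv k'
    have hw1 := hw k
    have hw2 := hw k'
    have hM1 := hM k
    have hM2 := hM k'
    have hX1 := hX k
    have hX2 := hX k'
    have hF1 := hF k
    have hF2 := hF k'
    have hMd' : ∀ i, M k ≤ i → i < M k + μ k → M k' ≤ i → i < M k' + μ k' → False := by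
      have := hMd k k' hk
      intros; omega
    have hXd' : ∀ i, X k ≤ i → i < X k + α k → X k' ≤ i → i < X k' + α k' → False := by
      have := hXd k k' hk
      intros; omega
    have hFd' : ∀ i, F k ≤ i → i < F k + β k + 1 → F k' ≤ i → i < F k' + β k' + 1 → False := by
      have := hFd k k' hk
      intros; omega
    have hvd : v k ≠ v k' := fun h => hk (hvinj _ _ h)
    have hwd : w k ≠ w k' := fun h => hk (hwinj _ _ h)
    rcases hmem k x hx with h | ⟨i, h1, h2, h⟩ | h | ⟨i, h1, h2, h⟩ | ⟨i, h1, h2, h⟩ <;>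
    rcases hmem k' x hx' with h' | ⟨j, h1', h2', h'⟩ | h' | ⟨j, h1', h2', h'⟩ | ⟨j, h1', h2', h'⟩ <;>
    rw [h] at h'
    · exact hvd (hUinj _ _ hv1.2 hv2.2 h')
    · have := hUinj _ _ (by omega) (by omega) h'; omega
    · have := hUinj _ _ (by omega) (by omega) h'; omega
    · exact haU _ _ (by omega) h'.symm
    · exact hbU _ _ (by omega) h'.symm
    · have := hUinj _ _ (by omega) (by omega) h'; omega
    · have := hUinj _ _ (by omega) (by omega) h'
      have hij : i = j := by omega
      subst hij
      exact hMd' i h1 h2 h1' h2'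
    · have := hUinj _ _ (by omega) (by omega) h'; omega
    · exact haU _ _ (by omega) h'.symm
    · exact hbU _ _ (by omega) h'.symm
    · have := hUinj _ _ (by omega) (by omega) h'; omega
    · have := hUinj _ _ (by omega) (by omega) h'; omega
    · exact hwd (hUinj _ _ (by omega) (by omega) h')
    · exact haU _ _ (by omega) h'.symm
    · exact hbU _ _ (by omega) h'.symm
    · exact haU _ _ (by omega) h'
    · exact haU _ _ (by omega) h'
    · exact haU _ _ (by omega) h'
    · have hij := ainj _ _ (by omega) (by omega) (by omega) (by omega) h'
      subst hij
      exact hXd' i h1 h2 h1' h2'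
    · exact hab _ _ h'
    · exact hbU _ _ (by omega) h'
    · exact hbU _ _ (by omega) h'
    · exact hbU _ _ (by omega) h'
    · exact hab _ _ h'.symm
    · have hij := binj _ _ (by omega) (by omega) (by omega) (by omega) h'
      subst hij
      exact hFd' i h1 h2 h1' h2'
  have hcyc : ∀ k, ∃ c, SeqC T q c ∧ ∀ i, c i ∈ U (v k) :: t k := by
    intro k
    have hv1 := hv k
    have hw1 := hw k
    have hM1 := hM k
    have hX1 := hX k
    have hF1 := hF k
    have hl1 := hlen k
    have hα1 := hα k
    refine seq_of_list (U (v k)) (t k) ?_ ?_ ?_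
    · simp [t, segL]; omega
    · have n1 : (segL m (M k) (μ k)).Nodup := nodup_segL fun i j h1 h2 h3 h4 h => by
        have := hUinj _ _ (by omega) (by omega) h; omega
      have n2 : (segL a (X k) (α k)).Nodup := nodup_segL fun i j h1 h2 h3 h4 h =>
        ainj _ _ (by omega) (by omega) (by omega) (by omega) h
      have n3 : (segL b (F k + 1) (β k)).Nodup := nodup_segL fun i j h1 h2 h3 h4 h =>
        binj _ _ (by omega) (by omega) (by omega) (by omega) h
      have n4 : b (F k) ∉ segL b (F k + 1) (β k) := fun h => by
        obtain ⟨i, h1, h2, h⟩ := mem_segL.1 h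
        have := binj _ _ (by omega) (by omega) (by omega) (by omega) h
        omega
      have n5 : (b (F k) :: segL b (F k + 1) (β k)).Nodup := List.nodup_cons.2 ⟨n4, n3⟩
      have n6 : (segL a (X k) (α k) ++ b (F k) :: segL b (F k + 1) (β k)).Nodup := by
        refine List.nodup_append.2 ⟨n2, n5, ?_⟩
        intro x hx y hy hxy
        obtain ⟨i, h1, h2, rfl⟩ := mem_segL.1 hx
        rcases List.mem_cons.1 hy with h | h
        · exact hab _ _ (hxy.trans h)
        · obtain ⟨j, _, _, rfl⟩ := mem_segL.1 h
          exact hab _ _ hxy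
      have n7 : ∀ j, j < l → U j ∉ segL a (X k) (α k) ++ b (F k) :: segL b (F k + 1) (β k) := by
        intro j hj hx
        simp only [List.mem_cons, List.mem_append, mem_segL] at hx
        rcases hx with ⟨i, h1, h2, h3⟩ | h | ⟨i, h1, h2, h3⟩
        · exact haU _ _ hj h3
        · exact hbU _ _ hj h.symm
        · exact hbU _ _ hj h3
      have n8 := List.nodup_cons.2 ⟨n7 (w k) (by omega), n6⟩
      refine List.nodup_cons.2 ⟨?_, List.nodup_append.2 ⟨n1, n8, ?_⟩⟩
      · intro hx
        rcases List.mem_append.1 hx with h | h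
        · obtain ⟨i, h1, h2, h⟩ := mem_segL.1 h
          have := hUinj _ _ (by omega) (by omega) h; omega
        rcases List.mem_cons.1 h with h | h
        · have := hUinj _ _ (by omega) (by omega) h; omega
        · exact n7 _ hv1.2 h
      · intro x hx y hy hxy
        obtain ⟨i, h1, h2, rfl⟩ := mem_segL.1 hx
        rcases List.mem_cons.1 hy with h | h
        · have := hUinj _ _ (by omega) (by omega) (hxy.trans h); omega
        · rw [← hxy] at h
          exact n7 _ (by omega) h
    · have e : t k ++ [U (v k)] = segL m (M k) (μ k) ++ U (w k) :: (segL a (X k) (α k) ++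
          b (F k) :: (segL b (F k + 1) (β k) ++ [U (v k)])) := by simp [t]
      rw [e]
      refine chain_segL _ _ _ _ _ _ ?_ ?_ ?_ ?_ (chain_segL _ _ _ _ _ _ ?_ ?_ ?_ ?_
        (chain_segL _ _ _ _ _ _ ?_ ?_ ?_ ?_ (by simp)))
      · exact fun _ => hUfar _ _ hv1.2 (by omega)
      · exact fun _ => hUfar _ _ hv1.2 (by omega)
      · intro i h1 h2
        have := hUstep (3 * q - 4 - (i + 1)) (by omega)
        rwa [show 3 * q - 4 - (i + 1) + 1 = 3 * q - 4 - i by omega] at this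
      · exact fun _ => hUfar _ _ (by omega) (by omega)
      · omega
      · exact fun _ => hwa k
      · exact fun i _ _ => ha.1 i
      · exact fun _ => hAB k
      · intro h0; have := hbv k; rw [h0] at this; exact this
      · exact fun _ => hb.1 _
      · exact fun i _ _ => hb.1 i
      · intro h0
        rw [show F k + 1 + β k - 1 = F k + β k by omega]
        exact hbv k
  choose c hc hct using hcyc
  refine ⟨c, hc, fun k k' i j hk h => hdis k k' _ hk (hct k i) (h ▸ hct k' j), fun k i => ?_⟩
  have hv1 := hv k
  have hw1 := hw k
  rcases hmem k _ (hct k i) with h | ⟨i, h1, h2, h⟩ | h | ⟨i, h1, h2, h⟩ | ⟨i, h1, h2, h⟩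
  · exact Or.inr (Or.inr ⟨_, hv1.2, h⟩)
  · exact Or.inr (Or.inr ⟨_, by omega, h⟩)
  · exact Or.inr (Or.inr ⟨_, by omega, h⟩)
  · exact Or.inl ⟨_, h⟩
  · exact Or.inr (Or.inl ⟨_, h⟩)

theorem pick_caps (q c1 c2 c3 : ℕ) (hq : 10 ≤ q) (h1 : 1 ≤ c1) (h2 : 1 ≤ c2) (h3 : 1 ≤ c3)
    (h : q ≤ c1 + c2 + c3) : ∃ A1 A2 A3, 1 ≤ A1 ∧ 1 ≤ A2 ∧ 1 ≤ A3 ∧ A1 ≤ c1 ∧ A2 ≤ c2 ∧ A3 ≤ c3 ∧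
      A1 + A2 + A3 = q := by
  by_cases hc : c1 + 2 ≤ q
  · by_cases hd : c1 + c2 + 1 ≤ q
    · exact ⟨c1, c2, q - c1 - c2, by omega⟩
    · exact ⟨c1, q - 1 - c1, 1, by omega⟩
  · exact ⟨q - 2, 1, 1, by omega⟩

theorem pick_B (q s : ℕ) (hq : 10 ≤ q) (hs : 1 ≤ s) :
    ∃ B, B + 1 ≤ s ∧ B + 4 ≤ q ∧ (s + 3 ≤ q → B + 1 = s) ∧ (q ≤ s + 3 → B + 4 = q) := by
  by_cases h : s + 3 ≤ q
  · exact ⟨s - 1, by omega⟩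
  · exact ⟨q - 4, by omega⟩

theorem pick_all (q p1 p2 p3 : ℕ) (hq : 10 ≤ q) (h12 : p1 < p2) (h23 : p2 < p3) (h3 : p3 < q) :
    ∃ B1 B2 B3 A1 A2 A3 m1 m2 m3 f1 f2 f3 : ℕ, f1 + B1 = p1 + q ∧ f2 + B2 = p2 ∧ f3 + B3 = p3 ∧
      p3 < f1 ∧ p1 < f2 ∧ p2 < f3 ∧ 1 ≤ A1 ∧ 1 ≤ A2 ∧ 1 ≤ A3 ∧ A1 + A2 + A3 = q ∧
      m1 + A1 + B1 + 3 = q ∧ m2 + A2 + B2 + 3 = q ∧ m3 + A3 + B3 + 3 = q ∧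
      m1 + m2 + m3 + 2 ≤ q := by
  obtain ⟨s1, hs1⟩ : ∃ s, p3 + s = p1 + q := ⟨p1 + q - p3, by omega⟩
  obtain ⟨s2, hs2⟩ : ∃ s, p1 + s = p2 := ⟨p2 - p1, by omega⟩
  obtain ⟨s3, hs3⟩ : ∃ s, p2 + s = p3 := ⟨p3 - p2, by omega⟩
  obtain ⟨B1, b1, b1', b1'', b1'''⟩ := pick_B q s1 hq (by omega)
  obtain ⟨B2, b2, b2', b2'', b2'''⟩ := pick_B q s2 hq (by omega)
  obtain ⟨B3, b3, b3', b3'', b3'''⟩ := pick_B q s3 hq (by omega)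
  have hs : s1 + s2 + s3 = q := by omega
  have hB : q ≤ B1 + B2 + B3 + 4 := by omega
  obtain ⟨A1, A2, A3, a1, a2, a3, c1, c2, c3, ha⟩ := pick_caps q (q - 3 - B1) (q - 3 - B2)
    (q - 3 - B3) hq (by omega) (by omega) (by omega) (by omega)
  clear b1'' b1''' b2'' b2''' b3'' b3'''
  exact ⟨B1, B2, B3, A1, A2, A3, q - 3 - B1 - A1, q - 3 - B2 - A2, q - 3 - B3 - A3,
    p1 + q - B1, p2 - B2, p3 - B3, by omega, by omega, by omega, by omega, by omega, by omega,
    a1, a2, a3, ha, by omega, by omega, by omega, by omega⟩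

set_option maxHeartbeats 1000000 in
theorem core {V : Type*} {T : V → V → Prop} (q l : ℕ) (hq : 10 ≤ q) (a b U : ℕ → V)
    (ha : SeqC T q a) (hb : SeqC T q b) (hab : ∀ i j, a i ≠ b j)
    (haU : ∀ i j, j < l → a i ≠ U j) (hbU : ∀ i j, j < l → b i ≠ U j)
    (hUinj : ∀ i j, i < l → j < l → U i = U j → i = j)
    (hUstep : ∀ i, i + 1 < l → T (U (i + 1)) (U i))
    (hUfar : ∀ i j, i < l → j + (q - 1) ≤ i → T (U i) (U j))
    (w : ℕ → ℕ) (hw : ∀ i, w i ≤ q) (hwinj : ∀ i j, w i = w j → i % q = j % q)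
    (hwa : ∀ i, T (U (w i)) (a i))
    (hmiss : ∀ f x : Fin 3 → ℕ, (∀ k k', f k % q = f k' % q → k = k') →
      ∃ r, ∀ k, T (a (r + x k)) (b (f k)))
    (p1 p2 p3 v1 v2 v3 : ℕ) (h12 : p1 < p2) (h23 : p2 < p3) (h3 : p3 < q)
    (hv1 : 4 * q - 5 ≤ v1 ∧ v1 < l) (hv2 : 4 * q - 5 ≤ v2 ∧ v2 < l)
    (hv3 : 4 * q - 5 ≤ v3 ∧ v3 < l) (d12 : v1 ≠ v2) (d13 : v1 ≠ v3) (d23 : v2 ≠ v3)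
    (hb1 : T (b p1) (U v1)) (hb2 : T (b p2) (U v2)) (hb3 : T (b p3) (U v3)) :
    ∃ c : Fin 3 → ℕ → V, (∀ k, SeqC T q (c k)) ∧ (∀ k k' i j, k ≠ k' → c k i ≠ c k' j) ∧
      ∀ k i, (∃ j, c k i = a j) ∨ (∃ j, c k i = b j) ∨ ∃ j < l, c k i = U j := by
  obtain ⟨B1, B2, B3, A1, A2, A3, m1, m2, m3, f1, f2, f3, e1, e2, e3, g1, g2, g3, a1, a2, a3,
    ea, l1, l2, l3, lm⟩ := pick_all q p1 p2 p3 hq h12 h23 h3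
  obtain ⟨r, hr⟩ := hmiss ![f1, f2, f3]
    ![A1 - 1, A1 + A2 - 1, A1 + A2 + A3 - 1] (by
      intro k k' h
      have : ∀ k : Fin 3, p1 + 1 ≤ ![f1, f2, f3] k ∧
        ![f1, f2, f3] k < p1 + 1 + q := by
        intro k; fin_cases k <;> simp <;> omega
      have h := mod_inj_window (this k).1 (this k).2 (this k').1 (this k').2 h
      fin_cases k <;> fin_cases k' <;> simp at h ⊢ <;> omega)
  have hr0 := hr 0
  have hr1 := hr 1
  have hr2 := hr 2
  simp at hr0 hr1 hr2
  refine core1 q l hq a b U ha hb hab haU hbU hUinj hUstep hUfar ![v1, v2, v3]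
    ![w r, w (r + A1), w (r + (A1 + A2))]
    ![0, m1, m1 + m2] ![m1, m2, m3] ![r, r + A1, r + (A1 + A2)] ![A1, A2, A3]
    ![f1, f2, f3] ![B1, B2, B3]
    ?_ ?_ ?_ ?_ ?_ ?_ ?_ ?_ r ?_ ?_ (p1 + 1) ?_ ?_ ?_ ?_ ?_
  · intro k; fin_cases k <;> simp <;> omega
  · intro k k' h; fin_cases k <;> fin_cases k' <;> simp at h ⊢ <;> omega
  · intro k; fin_cases k <;> simp [hw]
  · intro k k' h
    have h' := hwinj (![r, r + A1, r + (A1 + A2)] k) (![r, r + A1, r + (A1 + A2)] k')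
      (by fin_cases k <;> fin_cases k' <;> exact h)
    have : ∀ k : Fin 3, r ≤ ![r, r + A1, r + (A1 + A2)] k ∧
        ![r, r + A1, r + (A1 + A2)] k < r + q := by
        intro k; fin_cases k <;> simp <;> omega
    have h := mod_inj_window (this k).1 (this k).2 (this k').1 (this k').2 h'
    fin_cases k <;> fin_cases k' <;> simp at h ⊢ <;> omega
  · intro k; fin_cases k <;> simp <;> omega
  · intro k; fin_cases k <;> simp <;> omega
  · intro k; fin_cases k <;> simp <;> omega
  · intro k k' h; fin_cases k <;> fin_cases k' <;> simp at h ⊢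
  · intro k; fin_cases k <;> simp <;> omega
  · intro k k' h; fin_cases k <;> fin_cases k' <;> simp at h ⊢ <;> omega
  · intro k; fin_cases k <;> simp <;> omega
  · intro k k' h; fin_cases k <;> fin_cases k' <;> simp at h ⊢ <;> omega
  · intro k; fin_cases k <;> simp [hwa]
  · intro k; fin_cases k <;> simp
    · rwa [show r + A1 - 1 = r + (A1 - 1) by omega]
    · rwa [show r + A1 + A2 - 1 = r + (A1 + A2 - 1) by omega]
    · rwa [show r + (A1 + A2) + A3 - 1 = r + (A1 + A2 + A3 - 1) by omega]
  · intro k; fin_cases k <;> simp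
    · rw [e1, (hb.2 (p1 + q) p1).2 (by simp)]; exact hb1
    · rw [e2]; exact hb2
    · rw [e3]; exact hb3

theorem far_lemma {V : Type*} {T : V → V → Prop} (hT : IsTournament T) (q l : ℕ) (hq : 10 ≤ q)
    (U : ℕ → V) (hUinj : ∀ i j, i < l → j < l → U i = U j → i = j)
    (hUstep : ∀ i, i + 1 < l → T (U (i + 1)) (U i))
    (hno : ¬ ∃ b, SeqC T q b ∧ ∀ i, ∃ j < l, b i = U j) :
    ∀ i j, i < l → j + (q - 1) ≤ i → T (U i) (U j) := by
  intro i j hi hij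
  by_contra hcon
  have hne : U i ≠ U j := fun h => by have := hUinj _ _ hi (by omega) h; omega
  have hji : T (U j) (U i) := (hT.2 _ _ hne.symm).2 hcon
  apply hno
  obtain ⟨a, ha, ham⟩ := seq_of_list (T := T) (k := i - j + 1) (U i)
    (segL (fun x => U (i - x)) 1 (i - j)) (by simp [segL]) (by
      refine List.nodup_cons.2 ⟨fun h => ?_, nodup_segL fun x y h1 h2 h3 h4 h => ?_⟩
      · obtain ⟨x, h1, h2, h⟩ := mem_segL.1 h
        have := hUinj _ _ (by omega) (by omega) h
        omega
      · have := hUinj _ _ (by omega) (by omega) h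
        omega)
    (chain_segL _ _ _ _ _ _ (by omega)
      (fun _ => by
        have := hUstep (i - 1) (by omega)
        rwa [show i - 1 + 1 = i by omega] at this)
      (fun x h1 h2 => by
        have := hUstep (i - (x + 1)) (by omega)
        rwa [show i - (x + 1) + 1 = i - x by omega] at this)
      (fun _ => by
        rw [show i - (1 + (i - j) - 1) = j by omega]; exact hji) (by simp))
  obtain ⟨b, hb, hba⟩ := moon_s19 hT _ a ha q (by omega) (by omega)
  refine ⟨b, hb, fun x => ?_⟩
  obtain ⟨y, hy⟩ := hba x
  rw [← hy]
  rcases List.mem_cons.1 (ham y) with h | h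
  · exact ⟨i, hi, h⟩
  · obtain ⟨z, h1, h2, h⟩ := mem_segL.1 h
    exact ⟨i - z, by omega, h.symm⟩

theorem miss_lemma {V : Type*} [Fintype V] {T : V → V → Prop} (q : ℕ) (hq : 10 ≤ q) (a b : ℕ → V)
    (ha : SeqC T q a) (hb : SeqC T q b)
    (hA : (Set.range a).ncard = q) (hB : (Set.range b).ncard = q)
    (harcs : q ^ 2 - q + 3 ≤ arcs T (Set.range a) (Set.range b))
    (f x : Fin 3 → ℕ) (hf : ∀ k k', f k % q = f k' % q → k = k') :
      ∃ r, ∀ k, T (a (r + x k)) (b (f k)) := by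
  by_contra hcon
  push Not at hcon
  choose g hg using hcon
  let N : Set (V × V) := (fun r => (a (r + x (g r)), b (f (g r)))) '' (Set.Iio q)
  have hN : N.ncard = q := by
    rw [Set.InjOn.ncard_image]
    · simp
    · intro r hr s hs hrs
      simp only [Prod.mk.injEq] at hrs
      have e := hf _ _ ((hb.2 _ _).1 hrs.2)
      have h1 := (ha.2 _ _).1 hrs.1
      rw [e] at h1
      have h2 : r ≡ s [MOD q] := Nat.ModEq.add_right_cancel' _ h1
      exact Nat.ModEq.eq_of_lt_of_lt h2 hr hs
  have hd : Disjoint N {p : V × V | p.1 ∈ Set.range a ∧ p.2 ∈ Set.range b ∧ T p.1 p.2} := by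
    rw [Set.disjoint_left]
    rintro _ ⟨r, _, rfl⟩ h
    exact hg r h.2.2
  have hsub : N ∪ {p : V × V | p.1 ∈ Set.range a ∧ p.2 ∈ Set.range b ∧ T p.1 p.2} ⊆
      (Set.range a) ×ˢ (Set.range b) := by
    rintro _ (⟨r, _, rfl⟩ | h)
    · exact ⟨⟨_, rfl⟩, ⟨_, rfl⟩⟩
    · exact ⟨h.1, h.2.1⟩
  have h1 := Set.ncard_le_ncard hsub (Set.toFinite _)
  rw [Set.ncard_union_eq hd (Set.toFinite _) (Set.toFinite _), Set.ncard_prod, hA, hB, hN] at h1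
  unfold arcs at harcs
  have : q ≤ q ^ 2 := by nlinarith
  have : q * q = q ^ 2 := by ring
  omega

theorem range_seq {V : Type*} {q : ℕ} [NeZero q] (c : ZMod q → V) :
    Set.range (fun i : ℕ => c (i : ZMod q)) = Set.range c := by
  ext x
  constructor
  · rintro ⟨i, rfl⟩; exact ⟨_, rfl⟩
  · rintro ⟨i, rfl⟩; exact ⟨i.val, by simp⟩

theorem stmt19 {V : Type*} [Fintype V] (T : V → V → Prop) (hT : IsTournament T)
    (q n : ℕ) (hq : 10 ≤ q)
    (C : Fin n → ZMod q → V) (hC : ∀ j, IsCycle T q (C j)) (hdisj : DisjointCycles C)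
    (hfree : ¬ ∃ c : ZMod q → V, IsCycle T q c ∧
      Set.range c ⊆ (⋃ j, Set.range (C j))ᶜ)
    (l : ℕ) (hl : 4 * q - 5 ≤ l) (u : Fin l → V)
    (hP : IsHamPathOn T ((⋃ j, Set.range (C j))ᶜ) u)
    (i₀ j₀ : Fin n) (hij : i₀ ≠ j₀)
    (hm1 : HasMatching T (u '' {i : Fin l | (i : ℕ) < q + 1}) (Set.range (C i₀)) q)
    (hm2 : HasMatching T (Set.range (C j₀)) (u '' {i : Fin l | 4 * q - 5 ≤ (i : ℕ)}) 3)
    (harcs : q ^ 2 - q + 3 ≤ arcs T (Set.range (C i₀)) (Set.range (C j₀))) :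
    HasDisjointCycles T (n + 1) q := by
  classical
  have : NeZero q := ⟨by omega⟩
  obtain ⟨hui, hur, hus⟩ := hP
  have hl0 : 0 < l := by omega
  let U : ℕ → V := fun i => if h : i < l then u ⟨i, h⟩ else u ⟨0, hl0⟩
  have hUu : ∀ i (h : i < l), U i = u ⟨i, h⟩ := fun i h => by simp [U, h]
  have hUinj : ∀ i j, i < l → j < l → U i = U j → i = j := by
    intro i j hi hj h
    rw [hUu i hi, hUu j hj] at h
    simpa using hui h
  have hUstep : ∀ i, i + 1 < l → T (U (i + 1)) (U i) := by
    intro i hi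
    rw [hUu _ hi, hUu i (by omega)]
    exact hus i hi
  have hUout : ∀ i, i < l → ∀ j x, C j x ≠ U i := by
    intro i hi j x h
    have : u ⟨i, hi⟩ ∈ (⋃ j, Set.range (C j))ᶜ := hur ▸ ⟨_, rfl⟩
    rw [← hUu i hi] at this
    exact this (Set.mem_iUnion.2 ⟨j, x, h⟩)
  have hUfar := far_lemma hT q l hq U hUinj hUstep (by
    rintro ⟨b, hb, hbU⟩
    refine hfree ⟨_, cycle_of_seq (by omega) hb, ?_⟩
    rintro _ ⟨i, rfl⟩ h
    obtain ⟨j, x, hx⟩ := Set.mem_iUnion.1 h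
    obtain ⟨y, hy, hy'⟩ := hbU i.val
    exact hUout y hy j x (hx.trans hy'))
  have hCne : ∀ j j', j ≠ j' → ∀ x y, C j x ≠ C j' y := by
    intro j j' h x y e
    exact Set.disjoint_left.1 (hdisj j j' h) ⟨x, rfl⟩ ⟨y, e.symm⟩
  have ha := seq_of_cycle (hC i₀)
  have hb := seq_of_cycle (hC j₀)
  have hcard : ∀ j, (Set.range (C j)).ncard = q := by
    intro j
    rw [← Set.image_univ, Set.ncard_image_of_injective _ (hC j).1, Set.ncard_univ, Nat.card_zmod]
  -- the matching into the first cycle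
  obtain ⟨e, he, hed⟩ := hm1
  have hw : ∃ w : ZMod q → ℕ, (∀ i, w i ≤ q) ∧ (∀ i j, w i = w j → i = j) ∧
      ∀ i, T (U (w i)) (C i₀ i) := by
    choose g hg using fun k => (he k).2.1
    have ginj : Function.Injective g := by
      intro k k' h
      by_contra hne
      exact (hed k k' hne).2 (by rw [← hg, ← hg, h])
    have gbij : Function.Bijective g := by
      rw [Fintype.bijective_iff_injective_and_card]
      exact ⟨ginj, by simp [ZMod.card]⟩
    choose s hs hs' using fun k => (he k).1
    choose g' hg' using gbij.2
    refine ⟨fun i => (s (g' i)).val, fun i => ?_, fun i j h => ?_, fun i => ?_⟩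
    · have := hs (g' i)
      simp only [Set.mem_ofPred_eq] at this
      exact Nat.le_of_lt_succ this
    · have h1 : s (g' i) = s (g' j) := Fin.ext h
      by_contra hne
      have h2 : g' i ≠ g' j := fun h => hne (by rw [← hg' i, ← hg' j, h])
      exact (hed _ _ h2).1 (by rw [← hs', ← hs', h1])
    · have := (he (g' i)).2.2
      rw [← hs', ← hg, hg'] at this
      rw [hUu _ (s (g' i)).2]
      exact this
  obtain ⟨w, hwq, hwinj, hwa⟩ := hw
  -- the matching out of the second cycle
  obtain ⟨e2, he2, hed2⟩ := hm2
  choose pz hpz using fun k => (he2 k).2.1 |> fun _ => (he2 k).1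
  choose vz hvz hvz' using fun k => (he2 k).2.1
  have hpd : ∀ k k', k ≠ k' → (pz k).val ≠ (pz k').val := by
    intro k k' hk h
    exact (hed2 k k' hk).1 (by rw [← hpz, ← hpz, ZMod.val_injective q h])
  have hvd : ∀ k k', k ≠ k' → (vz k).val ≠ (vz k').val := by
    intro k k' hk h
    exact (hed2 k k' hk).2 (by rw [← hvz', ← hvz', Fin.ext h])
  have hvb : ∀ k, 4 * q - 5 ≤ (vz k).val ∧ (vz k).val < l := fun k => ⟨hvz k, (vz k).2⟩
  have hTv : ∀ k, T (C j₀ (((pz k).val : ℕ) : ZMod q)) (U (vz k).val) := by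
    intro k
    have := (he2 k).2.2
    rw [← hpz, ← hvz'] at this
    rw [hUu _ (vz k).2]
    simpa using this
  have key : ∀ k1 k2 k3 : Fin 3, k1 ≠ k2 → k1 ≠ k3 → k2 ≠ k3 → (pz k1).val < (pz k2).val →
      (pz k2).val < (pz k3).val →
      ∃ c : Fin 3 → ℕ → V, (∀ k, SeqC T q (c k)) ∧ (∀ k k' i j, k ≠ k' → c k i ≠ c k' j) ∧
      ∀ k i, (∃ j : ℕ, c k i = C i₀ j) ∨ (∃ j : ℕ, c k i = C j₀ j) ∨ ∃ j < l, c k i = U j := by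
    intro k1 k2 k3 h12 h13 h23 hp12 hp23
    exact core q l hq (fun i : ℕ => C i₀ i) (fun i : ℕ => C j₀ i) U ha hb
      (fun i j => hCne _ _ hij _ _) (fun i j hj => hUout j hj _ _)
      (fun i j hj => hUout j hj _ _) hUinj hUstep hUfar (fun i : ℕ => w i) (fun i => hwq _)
      (fun i j h => (ZMod.natCast_eq_natCast_iff' _ _ _).1 (hwinj _ _ h)) (fun i => hwa _)
      (miss_lemma q hq _ _ ha hb (by rw [range_seq, hcard]) (by rw [range_seq, hcard])
        (by rw [range_seq, range_seq]; exact harcs))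
      _ _ _ _ _ _ hp12 hp23 (ZMod.val_lt _) (hvb k1) (hvb k2) (hvb k3) (hvd _ _ h12) (hvd _ _ h13)
      (hvd _ _ h23) (hTv k1) (hTv k2) (hTv k3)
  have key2 : ∃ c : Fin 3 → ℕ → V, (∀ k, SeqC T q (c k)) ∧
      (∀ k k' i j, k ≠ k' → c k i ≠ c k' j) ∧
      ∀ k i, (∃ j : ℕ, c k i = C i₀ j) ∨ (∃ j : ℕ, c k i = C j₀ j) ∨ ∃ j < l, c k i = U j := by
    have h01 := hpd 0 1 (by decide)
    have h02 := hpd 0 2 (by decide)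
    have h12 := hpd 1 2 (by decide)
    rcases lt_or_gt_of_ne h01 with h01 | h01 <;> rcases lt_or_gt_of_ne h02 with h02 | h02 <;>
    rcases lt_or_gt_of_ne h12 with h12 | h12
    · exact key 0 1 2 (by decide) (by decide) (by decide) h01 h12
    · exact key 0 2 1 (by decide) (by decide) (by decide) h02 h12
    · omega
    · exact key 2 0 1 (by decide) (by decide) (by decide) h02 h01
    · exact key 1 0 2 (by decide) (by decide) (by decide) h01 h02
    · omega
    · exact key 1 2 0 (by decide) (by decide) (by decide) h12 h02
    · exact key 2 1 0 (by decide) (by decide) (by decide) h12 h01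
  obtain ⟨c, hc, hcd, hcm⟩ := key2
  have hcC : ∀ j, j ≠ i₀ → j ≠ j₀ → ∀ x k i, C j x ≠ c k i := by
    intro j h1 h2 x k i h
    rcases hcm k i with ⟨y, hy⟩ | ⟨y, hy⟩ | ⟨y, hy, hy'⟩
    · exact hCne _ _ h1 _ _ (h.trans hy)
    · exact hCne _ _ h2 _ _ (h.trans hy)
    · exact hUout _ hy _ _ (h.trans hy')
  let d : Fin 3 → ZMod q → V := fun k i => c k i.val
  have hd : ∀ k, IsCycle T q (d k) := fun k => cycle_of_seq (by omega) (hc k)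
  let κ : Option (Fin n) → ZMod q → V := fun o => match o with
    | none => d 2
    | some j => if j = i₀ then d 0 else if j = j₀ then d 1 else C j
  have hκ : ∀ o, IsCycle T q (κ o) := by
    intro o
    rcases o with _ | j
    · exact hd 2
    · simp only [κ]
      split_ifs
      · exact hd 0
      · exact hd 1
      · exact hC j
  have hκd : ∀ o o', o ≠ o' → ∀ x y, κ o x ≠ κ o' y := by
    intro o o' ho x y
    rcases o with _ | j <;> rcases o' with _ | j'
    · exact absurd rfl ho
    · simp only [κ]
      split_ifs with h1 h2
      · exact hcd _ _ _ _ (by decide)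
      · exact hcd _ _ _ _ (by decide)
      · exact (hcC _ h1 h2 _ _ _).symm
    · simp only [κ]
      split_ifs with h1 h2
      · exact hcd _ _ _ _ (by decide)
      · exact hcd _ _ _ _ (by decide)
      · exact (hcC _ h1 h2 _ _ _)
    · have hjj : j ≠ j' := fun h => ho (by rw [h])
      simp only [κ]
      split_ifs with h1 h2 h3 h4 h5 h6 h7 h8
      · exact absurd (h1.trans h2.symm) hjj
      · exact hcd _ _ _ _ (by decide)
      · exact (hcC _ h2 h3 _ _ _).symm
      · exact hcd _ _ _ _ (by decide)
      · exact absurd (h4.trans h6.symm) hjj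
      · exact (hcC _ h5 h6 _ _ _).symm
      · exact hcC _ h1 h4 _ _ _
      · exact hcC _ h1 h4 _ _ _
      · exact hCne _ _ hjj _ _
  refine ⟨fun i => κ (finSuccEquiv n i), fun i => hκ _, fun i j hne => ?_⟩
  rw [Set.disjoint_left]
  rintro _ ⟨x, rfl⟩ ⟨y, hy⟩
  exact hκd _ _ (fun h => hne ((finSuccEquiv n).injective h)) x y hy.symm
end
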